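/- For every integer k ≥ 2 and every real 0 < δ ≤ 1 there exists a real θ > 0 (depending only on k and δ) with the following property. Let L be an infinite subset of ℕ and A ⊆ [k]^{<ℕ} with dens_{[k]^ℓ}(A) ≥ δ for every ℓ ∈ L. Then for every variable word p over k there exist a word c over k, a variable word w over k having p as an initial segment, and an infinite subset L′ of L such that: (i) the set V = {c} ∪ {c⌢w(a) : a ∈ [k]} is contained in ⋃_{ℓ∈L₀} A ∩ [k]^ℓ, where L₀ = { ℓ ∈ L : ℓ < min(L′) }; and (ii) setting V(1) = {c⌢w(a) : a ∈ [k]} and ℓ₁ the unique integer with V(1) ⊆ [k]^{ℓ₁}, for every ℓ ∈ L′ we have dens_{[k]^{ℓ−ℓ₁}}( { s ∈ [k]^{<ℕ} : t⌢s ∈ A for every t ∈ V(1) } ) ≥ θ. -/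

import Mathlib

/-- A word over `k`: a finite sequence with values in `[k]`. -/
abbrev Word (k : ℕ) := List (Fin k)

/-- A "possibly variable" letter sequence: `none` plays the role of the variable `v`. -/
abbrev VWord (k : ℕ) := List (Option (Fin k))

/-- Substitution of the letter `a` for every occurrence of the variable. -/
def subst {k : ℕ} (w : VWord k) (a : Fin k) : Word k := w.map (fun o => o.getD a)

/-- `w` is a variable word: the variable `v` occurs in it. -/
def IsVar {k : ℕ} (w : VWord k) : Prop := none ∈ w

/-- The density `dens_{[k]^n}(A) = |A ∩ [k]^n| / k^n`. -/
noncomputable def dens (k n : ℕ) (A : Set (Word k)) : ℝ :=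
  (Set.ncard {x ∈ A | x.length = n} : ℝ) / (k : ℝ) ^ n


namespace CSD

/-! ### Indicators -/

open Classical in
noncomputable def ind (P : Prop) : ℝ := if P then 1 else 0

lemma ind_true {P : Prop} (h : P) : ind P = 1 := by simp [ind, h]
lemma ind_false {P : Prop} (h : ¬ P) : ind P = 0 := by simp [ind, h]
lemma ind_nonneg (P : Prop) : 0 ≤ ind P := by unfold ind; split_ifs <;> norm_num
lemma ind_le_one (P : Prop) : ind P ≤ 1 := by unfold ind; split_ifs <;> norm_num
lemma ind_mono {P Q : Prop} (h : P → Q) : ind P ≤ ind Q := by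
  by_cases hP : P
  · rw [ind_true hP, ind_true (h hP)]
  · rw [ind_false hP]; exact ind_nonneg _
lemma ind_congr {P Q : Prop} (h : P ↔ Q) : ind P = ind Q := by rw [propext h]
lemma ind_and (P Q : Prop) : ind (P ∧ Q) = ind P * ind Q := by
  by_cases hP : P <;> by_cases hQ : Q <;> simp [ind, hP, hQ]
lemma ind_pos {P : Prop} (h : 0 < ind P) : P := by
  by_contra hP; rw [ind_false hP] at h; exact lt_irrefl _ h

/-! ### Polymorphic embeddings -/

structure Emb (β : Type) where
  ev : ∀ {γ : Type}, (β → γ) → List γ → List γ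
  nat : ∀ {γ γ' : Type} (ι : β → γ) (f : γ → γ') (x : List γ),
    (ev ι x).map f = ev (f ∘ ι) (x.map f)
  left : ∀ {γ : Type} (ι : β → γ) (x : List γ) (a : γ) (y : List γ),
    ∃ z, ev ι (x ++ a :: y) = ev ι x ++ a :: z

def Bd {β : Type} (φ : Emb β) (n N : ℕ) : Prop :=
  ∀ (γ : Type) (ι : β → γ) (x : List γ), x.length < n → (φ.ev ι x).length < N

lemma Bd.mono {β : Type} {φ : Emb β} {n n' N N' : ℕ} (h : Bd φ n N) (hn : n' ≤ n)
    (hN : N ≤ N') : Bd φ n' N' := fun γ ι x hx =>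
  (h γ ι x (hx.trans_le hn)).trans_le hN

/-- A length bound for one alphabet is a length bound for all. -/
lemma Bd.of_one {β : Type} {φ : Emb β} {n N : ℕ}
    (h : ∀ x : List Unit, x.length < n → (φ.ev (fun _ => ()) x).length < N) : Bd φ n N := by
  intro γ ι x hx
  have := h (x.map (fun _ => ())) (by simpa using hx)
  have h2 := φ.nat ι (fun _ => ()) x
  have h3 : ((fun _ => ()) ∘ ι : β → Unit) = fun _ => () := rfl
  rw [h3] at h2
  rw [← h2] at this
  simpa using this

namespace Emb

variable {α β : Type}

def idE : Emb β where
  ev := fun _ x => x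
  nat := by intros; rfl
  left := by intro γ ι x a y; exact ⟨y, rfl⟩

def comp (φ ψ : Emb β) : Emb β where
  ev := fun ι x => φ.ev ι (ψ.ev ι x)
  nat := by intro γ γ' ι f x; rw [φ.nat, ψ.nat]
  left := by
    intro γ ι x a y
    obtain ⟨z, hz⟩ := ψ.left ι x a y
    rw [hz]
    exact φ.left ι _ a z

def pre (g : List β) : Emb β where
  ev := fun ι x => g.map ι ++ x
  nat := by intro γ γ' ι f x; simp
  left := by intro γ ι x a y; exact ⟨y, by simp⟩

def lift (T : Emb β) : Emb β where
  ev := fun ι x => match x with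
    | [] => []
    | a :: y => a :: T.ev ι y
  nat := by
    intro γ γ' ι f x
    cases x with
    | nil => rfl
    | cons a y => simp [T.nat]
  left := by
    intro γ ι x a y
    cases x with
    | nil => exact ⟨T.ev ι y, rfl⟩
    | cons b x =>
      obtain ⟨z, hz⟩ := T.left ι x a y
      exact ⟨z, by simp [hz]⟩

def cons (g : List β) (post : List (Option β)) (S : Emb β) : Emb β where
  ev := fun ι x => match x with
    | [] => g.map ι
    | a :: y => g.map ι ++ a :: (post.map (fun o => o.elim a ι) ++ S.ev ι y)
  nat := by
    intro γ γ' ι f x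
    cases x with
    | nil => simp
    | cons a y =>
      simp only [List.map_append, List.map_cons, List.map_map, S.nat]
      congr 3
      apply List.map_congr_left
      intro o _
      cases o <;> rfl
  left := by
    intro γ ι x a y
    cases x with
    | nil => exact ⟨_, rfl⟩
    | cons b x =>
      obtain ⟨z, hz⟩ := S.left ι x a y
      exact ⟨z, by simp [hz]⟩

def zero (φ : Emb (Option α)) : Emb α where
  ev := fun ι x => match x with
    | [] => []
    | a :: y => a :: φ.ev (fun o => o.elim a ι) y
  nat := by
    intro γ γ' ι f x
    cases x with
    | nil => rfl
    | cons a y =>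
      simp only [List.map_cons, φ.nat]
      congr 2
      funext o
      cases o <;> rfl
  left := by
    intro γ ι x a y
    cases x with
    | nil => exact ⟨_, rfl⟩
    | cons b x =>
      obtain ⟨z, hz⟩ := φ.left (fun o => o.elim b ι) x a y
      exact ⟨z, by simp [hz]⟩

def base (f : α → β) (ψ : Emb α) : Emb β where
  ev := fun ι x => ψ.ev (ι ∘ f) x
  nat := by intro γ γ' ι g x; rw [ψ.nat]; rfl
  left := by intro γ ι x a y; exact ψ.left _ x a y

lemma comp_ev (φ ψ : Emb β) {γ : Type} (ι : β → γ) (x : List γ) :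
    (φ.comp ψ).ev ι x = φ.ev ι (ψ.ev ι x) := rfl
lemma pre_ev (g : List β) {γ : Type} (ι : β → γ) (x : List γ) :
    (pre g).ev ι x = g.map ι ++ x := rfl
lemma base_ev (f : α → β) (ψ : Emb α) {γ : Type} (ι : β → γ) (x : List γ) :
    (base f ψ).ev ι x = ψ.ev (ι ∘ f) x := rfl
lemma idE_ev {γ : Type} (ι : β → γ) (x : List γ) : (idE : Emb β).ev ι x = x := rfl
lemma lift_nil (T : Emb β) {γ : Type} (ι : β → γ) : (lift T).ev ι [] = [] := rfl
lemma lift_cons (T : Emb β) {γ : Type} (ι : β → γ) (a : γ) (y : List γ) :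
    (lift T).ev ι (a :: y) = a :: T.ev ι y := rfl
lemma zero_nil (T : Emb (Option α)) {γ : Type} (ι : α → γ) : (zero T).ev ι [] = [] := rfl
lemma zero_cons (T : Emb (Option α)) {γ : Type} (ι : α → γ) (a : γ) (y : List γ) :
    (zero T).ev ι (a :: y) = a :: T.ev (fun o => o.elim a ι) y := rfl
lemma cons_nil (g : List β) (post : List (Option β)) (S : Emb β) {γ : Type} (ι : β → γ) :
    (cons g post S).ev ι [] = g.map ι := rfl
lemma cons_cons (g : List β) (post : List (Option β)) (S : Emb β) {γ : Type} (ι : β → γ)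
    (a : γ) (y : List γ) :
    (cons g post S).ev ι (a :: y) =
      g.map ι ++ a :: (post.map (fun o => o.elim a ι) ++ S.ev ι y) := rfl

end Emb

lemma Bd.comp {β : Type} {φ ψ : Emb β} {n M N : ℕ} (h : Bd φ M N) (h' : Bd ψ n M) :
    Bd (φ.comp ψ) n N := fun γ ι x hx => h γ ι _ (h' γ ι x hx)

lemma Bd.idE {β : Type} (n : ℕ) : Bd (Emb.idE : Emb β) n n := fun _ _ _ hx => hx

lemma Bd.pre {β : Type} (g : List β) (n : ℕ) : Bd (Emb.pre g) n (g.length + n) := by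
  intro γ ι x hx
  simp [Emb.pre_ev]; omega

lemma Bd.lift {β : Type} {T : Emb β} {n N : ℕ} (h : Bd T n N) :
    Bd (Emb.lift T) (n + 1) (N + 1) := by
  intro γ ι x hx
  cases x with
  | nil => simp [Emb.lift_nil]
  | cons a y =>
    have := h γ ι y (by simpa using hx)
    simpa [Emb.lift_cons] using this

lemma Bd.zero {α : Type} {T : Emb (Option α)} {n N : ℕ} (h : Bd T n N) :
    Bd (Emb.zero T) (n + 1) (N + 1) := by
  intro γ ι x hx
  cases x with
  | nil => simp [Emb.zero_nil]
  | cons a y =>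
    have := h γ (fun o => o.elim a ι) y (by simpa using hx)
    simpa [Emb.zero_cons] using this

lemma Bd.cons {β : Type} (g : List β) (post : List (Option β)) {S : Emb β} {n N : ℕ}
    (h : Bd S n N) : Bd (Emb.cons g post S) (n + 1) (g.length + 1 + post.length + N) := by
  intro γ ι x hx
  cases x with
  | nil => simp [Emb.cons_nil]; omega
  | cons a y =>
    have := h γ ι y (by simpa using hx)
    simp [Emb.cons_cons]; omega

lemma Bd.base {α β : Type} (f : α → β) {ψ : Emb α} {n N : ℕ} (h : Bd ψ n N) :
    Bd (Emb.base f ψ) n N := fun γ ι x hx => h γ _ x hx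

/-! ### Lines -/

def root {α : Type} : List (Option α) → List α
  | [] => []
  | none :: _ => []
  | some a :: w => a :: root w

def LineIn {α : Type} (w : List (Option α)) (S : Set (List α)) : Prop :=
  root w ∈ S ∧ ∀ a : α, w.map (fun o => o.getD a) ∈ S

def HasLine {α : Type} (S : Set (List α)) (N : ℕ) : Prop :=
  ∃ w : List (Option α), none ∈ w ∧ w.length < N ∧ LineIn w S

lemma HasLine.mono {α : Type} {S : Set (List α)} {N N' : ℕ} (h : HasLine S N) (hN : N ≤ N') :
    HasLine S N' := by
  obtain ⟨w, h1, h2, h3⟩ := h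
  exact ⟨w, h1, h2.trans_le hN, h3⟩

lemma root_append {α : Type} (c : List α) (u : List (Option α)) :
    root (c.map some ++ none :: u) = c := by
  induction c with
  | nil => rfl
  | cons a c ih => simp [root, ih]

lemma exists_decomp {α : Type} (w : List (Option α)) (h : none ∈ w) :
    ∃ (c : List α) (u : List (Option α)), w = c.map some ++ none :: u := by
  induction w with
  | nil => simp at h
  | cons o w ih =>
    cases o with
    | none => exact ⟨[], w, rfl⟩
    | some a =>
      obtain ⟨c, u, hc⟩ := ih (by simpa using h)
      exact ⟨a :: c, u, by simp [hc]⟩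

lemma map_getD_some {α : Type} (c : List α) (a : α) :
    (c.map some).map (fun o => o.getD a) = c := by
  simp [Function.comp_def]

lemma getD_comp_some {α : Type} (a : α) : ((fun o : Option α => o.getD a) ∘ some) = id := rfl

/-- the top of the image line -/
lemma Emb.map_getD {α : Type} (φ : Emb α) (w : List (Option α)) (a : α) :
    (φ.ev some w).map (fun o => o.getD a) = φ.ev id (w.map (fun o => o.getD a)) := by
  rw [φ.nat]; rfl

lemma Emb.map_some {α : Type} (φ : Emb α) (w : List α) :
    (φ.ev id w).map some = φ.ev some (w.map some) := by
  rw [φ.nat]; rfl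

lemma Emb.line_form {α : Type} (φ : Emb α) (c : List α) (u : List (Option α)) :
    ∃ z, φ.ev some (c.map some ++ none :: u) = (φ.ev id c).map some ++ none :: z := by
  obtain ⟨z, hz⟩ := φ.left some (c.map some) none u
  exact ⟨z, by rw [hz, φ.map_some]⟩

lemma Emb.root_ev {α : Type} (φ : Emb α) (c : List α) (u : List (Option α)) :
    root (φ.ev some (c.map some ++ none :: u)) = φ.ev id c := by
  obtain ⟨z, hz⟩ := φ.line_form c u
  rw [hz, root_append]

lemma Emb.none_mem {α : Type} (φ : Emb α) (w : List (Option α)) (h : none ∈ w) :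
    none ∈ φ.ev some w := by
  obtain ⟨c, u, rfl⟩ := exists_decomp w h
  obtain ⟨z, hz⟩ := φ.line_form c u
  rw [hz]; simp

lemma Emb.lineIn_iff {α : Type} (φ : Emb α) (w : List (Option α)) (h : none ∈ w)
    (S : Set (List α)) :
    LineIn (φ.ev some w) S ↔ LineIn w {x | φ.ev id x ∈ S} := by
  obtain ⟨c, u, rfl⟩ := exists_decomp w h
  unfold LineIn
  rw [φ.root_ev, root_append]
  simp only [φ.map_getD, Set.mem_ofPred_eq]

lemma Emb.hasLine {α : Type} (φ : Emb α) {n N : ℕ} (hB : Bd φ n N) {S : Set (List α)}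
    (h : HasLine {x | φ.ev id x ∈ S} n) : HasLine S N := by
  obtain ⟨w, h1, h2, h3⟩ := h
  exact ⟨φ.ev some w, φ.none_mem w h1, hB _ _ _ h2, (φ.lineIn_iff w h1 S).2 h3⟩

/-! ### The density statement -/

def P (α : Type) (δ : ℝ) : Prop :=
  ∃ N : ℕ, ∀ (Ω : Type) [Fintype Ω] (p : Ω → ℝ) (X : Ω → Set (List α)),
    (∀ ω, 0 ≤ p ω) → 0 < ∑ ω, p ω →
    (∀ x : List α, x.length < N → δ * ∑ ω, p ω ≤ ∑ ω, p ω * ind (x ∈ X ω)) →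
    ∃ ω, 0 < p ω ∧ HasLine (X ω) N

lemma P_empty (α : Type) [IsEmpty α] (δ : ℝ) (hδ : 0 < δ) : P α δ := by
  refine ⟨2, ?_⟩
  intro Ω _ p X hp hs hd
  have h := hd [] (by simp)
  have h1 : 0 < ∑ ω, p ω * ind ([] ∈ X ω) := lt_of_lt_of_le (mul_pos hδ hs) h
  obtain ⟨ω, _, hω⟩ := Finset.exists_lt_of_sum_lt (s := Finset.univ) (f := fun _ : Ω => (0:ℝ))
    (g := fun ω => p ω * ind ([] ∈ X ω)) (by simpa using h1)
  have h2 : 0 < ind ([] ∈ X ω) := by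
    by_contra h3
    have : ind ([] ∈ X ω) = 0 := le_antisymm (not_lt.1 h3) (ind_nonneg _)
    rw [this] at hω; simp at hω
  refine ⟨ω, ?_, [none], by simp, by simp, ?_, fun a => isEmptyElim a⟩
  · rcases (hp ω).lt_or_eq with h | h
    · exact h
    · rw [← h] at hω; simp at hω
  · exact ind_pos h2

lemma P_mono {α : Type} {δ δ' : ℝ} (h : δ ≤ δ') (hP : P α δ) : P α δ' := by
  obtain ⟨N, hN⟩ := hP
  refine ⟨N, fun Ω _ p X hp hs hd => hN Ω p X hp hs fun x hx => ?_⟩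
  exact le_trans (mul_le_mul_of_nonneg_right h hs.le) (hd x hx)

lemma P_equiv {α β : Type} (e : α ≃ β) {δ : ℝ} (hP : P α δ) : P β δ := by
  obtain ⟨N, hN⟩ := hP
  refine ⟨N, fun Ω _ p X hp hs hd => ?_⟩
  obtain ⟨ω, h1, w, h2, h3, h4⟩ := hN Ω p (fun ω => {x | x.map e ∈ X ω}) hp hs (fun x hx => by
    simpa using hd (x.map e) (by simpa using hx))
  refine ⟨ω, h1, w.map (Option.map e), ?_, by simpa using h3, ?_, ?_⟩
  · exact List.mem_map.2 ⟨none, h2, rfl⟩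
  · obtain ⟨c, u, rfl⟩ := exists_decomp w h2
    have h5 := h4.1
    rw [root_append] at h5
    have : (c.map some ++ none :: u).map (Option.map e) =
        (c.map e).map some ++ none :: u.map (Option.map e) := by
      simp [Function.comp_def]
    rw [this, root_append]
    exact h5
  · intro b
    have h5 := h4.2 (e.symm b)
    have : (w.map (fun o => o.getD (e.symm b))).map e =
        (w.map (Option.map e)).map (fun o => o.getD b) := by
      simp only [List.map_map]
      apply List.map_congr_left
      intro o _
      cases o <;> simp
    rw [← this]; exact h5

/-! finitely many words -/

lemma finite_lt (α : Type) [Finite α] (n : ℕ) : {x : List α | x.length < n}.Finite :=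
  List.finite_length_lt α n

end CSD


namespace CSD

lemma PL {α : Type} [Finite α] {δ : ℝ} (hδ : 0 < δ) (hP : P α δ) :
    ∃ (N : ℕ) (θ : ℝ), 0 < θ ∧ ∀ (Ω : Type) [Fintype Ω] (p : Ω → ℝ) (X : Ω → Set (List α)),
      (∀ ω, 0 ≤ p ω) → ∑ ω, p ω ≤ 1 →
      (∀ x : List α, x.length < N → 2 * δ ≤ ∑ ω, p ω * ind (x ∈ X ω)) →
      ∃ w : List (Option α), none ∈ w ∧ w.length < N ∧
        θ ≤ ∑ ω, p ω * ind (LineIn w (X ω)) := by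
  obtain ⟨N, hN⟩ := hP
  have hfin : {w : List (Option α) | none ∈ w ∧ w.length < N + 1}.Finite :=
    (finite_lt (Option α) (N + 1)).subset (fun w hw => hw.2)
  set W := hfin.toFinset with hW
  have hmW : ∀ w, w ∈ W ↔ none ∈ w ∧ w.length < N + 1 := by intro w; simp [hW]
  refine ⟨N + 1, δ / (W.card + 1), by positivity, ?_⟩
  intro Ω _ p X hp hs hd
  by_contra hcon
  push Not at hcon
  have hsm : ∑ ω, p ω * ind (HasLine (X ω) N) ≤ δ := by
    calc ∑ ω, p ω * ind (HasLine (X ω) N)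
        ≤ ∑ ω, ∑ w ∈ W, p ω * ind (LineIn w (X ω)) := by
          apply Finset.sum_le_sum
          intro ω _
          by_cases h : HasLine (X ω) N
          · obtain ⟨w, h1, h2, h3⟩ := h.mono (Nat.le_succ N)
            have := Finset.single_le_sum (f := fun w => p ω * ind (LineIn w (X ω))) (s := W)
              (fun w _ => mul_nonneg (hp ω) (ind_nonneg _)) ((hmW w).2 ⟨h1, h2⟩)
            refine le_trans ?_ this
            simp only [ind_true h3, ind_true h, le_refl]
          · rw [ind_false h, mul_zero]
            exact Finset.sum_nonneg fun w _ => mul_nonneg (hp ω) (ind_nonneg _)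
      _ = ∑ w ∈ W, ∑ ω, p ω * ind (LineIn w (X ω)) := Finset.sum_comm
      _ ≤ ∑ w ∈ W, δ / (W.card + 1) := by
          apply Finset.sum_le_sum
          intro w hw
          exact (hcon w ((hmW w).1 hw).1 ((hmW w).1 hw).2).le
      _ = W.card * (δ / (W.card + 1)) := by simp
      _ ≤ δ := by
          have : (0:ℝ) < W.card + 1 := by positivity
          rw [mul_div_assoc', div_le_iff₀ this]; nlinarith
  have hden : ∀ x : List α, x.length < N + 1 →
      δ ≤ ∑ ω, p ω * ind (¬ HasLine (X ω) N) * ind (x ∈ X ω) := by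
    intro x hx
    have h1 := hd x hx
    have h2 : ∑ ω, p ω * ind (x ∈ X ω) ≤ ∑ ω, p ω * ind (¬ HasLine (X ω) N) * ind (x ∈ X ω)
        + ∑ ω, p ω * ind (HasLine (X ω) N) := by
      rw [← Finset.sum_add_distrib]
      apply Finset.sum_le_sum
      intro ω _
      by_cases h : HasLine (X ω) N
      · rw [ind_true h, ind_false (not_not.2 h)]
        nlinarith [hp ω, ind_le_one (x ∈ X ω)]
      · rw [ind_false h, ind_true h]
        nlinarith [hp ω, ind_le_one (x ∈ X ω)]
    linarith
  have hp' : ∀ ω, 0 ≤ p ω * ind (¬ HasLine (X ω) N) := fun ω => mul_nonneg (hp ω) (ind_nonneg _)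
  have hle1 : ∑ ω, p ω * ind (¬ HasLine (X ω) N) ≤ 1 := by
    refine le_trans (Finset.sum_le_sum fun ω _ => ?_) hs
    exact mul_le_of_le_one_right (hp ω) (ind_le_one _)
  have hpos : 0 < ∑ ω, p ω * ind (¬ HasLine (X ω) N) := by
    refine lt_of_lt_of_le hδ (le_trans (hden [] (by simp)) (Finset.sum_le_sum fun ω _ => ?_))
    exact mul_le_of_le_one_right (hp' ω) (ind_le_one _)
  obtain ⟨ω, h1, h2⟩ := hN Ω (fun ω => p ω * ind (¬ HasLine (X ω) N)) X hp' hpos (by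
    intro x hx
    refine le_trans ?_ (hden x (by omega))
    nlinarith)
  simp [ind_false (not_not.2 h2)] at h1

/-! ### Colouring results -/

lemma HJ_list (β κ : Type) [Finite β] [Finite κ] :
    ∃ n : ℕ, ∀ χ : List β → κ, ∃ w : List (Option β), w.length = n ∧ none ∈ w ∧
      ∀ a b : β, χ (w.map (fun o => o.getD a)) = χ (w.map (fun o => o.getD b)) := by
  obtain ⟨ι, hι, h⟩ := Combinatorics.Line.exists_mono_in_high_dimension β κ
  let e := Fintype.equivFin ι
  refine ⟨Fintype.card ι, fun χ => ?_⟩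
  obtain ⟨l, c, hl⟩ := h (fun f => χ (List.ofFn (fun i => f (e.symm i))))
  have key : ∀ a, (List.ofFn (fun i => l.idxFun (e.symm i))).map (fun o => o.getD a)
      = List.ofFn (fun i => l a (e.symm i)) := by
    intro a
    rw [List.map_ofFn]
    rfl
  refine ⟨List.ofFn (fun i => l.idxFun (e.symm i)), by simp, ?_, ?_⟩
  · obtain ⟨i, hi⟩ := l.proper
    rw [List.mem_ofFn]
    exact ⟨e i, by simpa using hi⟩
  · intro a b
    rw [key, key]
    exact (hl a).trans (hl b).symm

lemma CS (β κ : Type) [Finite β] [Nonempty β] [Fintype κ] (m : ℕ) : ∀ d : κ → ℕ, ∑ k, d k = m →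
    ∃ N : ℕ, ∀ χ : List β → κ, ∃ (k : κ) (φ : Emb β), Bd φ (d k) N ∧
      ∀ x : List β, x.length < d k → χ (φ.ev id x) = k := by
  classical
  induction m with
  | zero =>
    intro d hd
    refine ⟨0, fun χ => ⟨χ [], Emb.idE, ?_, ?_⟩⟩
    · have : d (χ []) = 0 := by
        rw [Finset.sum_eq_zero_iff] at hd
        exact hd _ (Finset.mem_univ _)
      rw [this]; exact Bd.idE 0
    · have : d (χ []) = 0 := by
        rw [Finset.sum_eq_zero_iff] at hd
        exact hd _ (Finset.mem_univ _)
      intro x hx; omega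
  | succ m ih =>
    intro d hd
    have h0 : ∀ k0 : κ, ∃ N : ℕ, 0 < d k0 → ∀ χ : List β → κ, ∃ (k : κ) (φ : Emb β),
        Bd φ (Function.update d k0 (d k0 - 1) k) N ∧
        ∀ x : List β, x.length < Function.update d k0 (d k0 - 1) k → χ (φ.ev id x) = k := by
      intro k0
      by_cases hk : 0 < d k0
      · have : ∑ k, Function.update d k0 (d k0 - 1) k = m := by
          rw [Finset.sum_update_of_mem (Finset.mem_univ k0)]
          have := Finset.sum_erase_add (s := Finset.univ) (f := d) (Finset.mem_univ k0)
          rw [Finset.sdiff_singleton_eq_erase]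
          omega
        obtain ⟨N, hN⟩ := ih _ this
        exact ⟨N, fun _ => hN⟩
      · exact ⟨0, fun h => absurd h hk⟩
    choose Nf hNf using h0
    set N' := ∑ k, Nf k with hN'
    have hle : ∀ k, Nf k ≤ N' := fun k =>
      Finset.single_le_sum (f := Nf) (fun _ _ => Nat.zero_le _) (Finset.mem_univ k)
    have : Finite {z : List β // z.length < N'} := (finite_lt β N').to_subtype
    obtain ⟨n, hn⟩ := HJ_list β ({z : List β // z.length < N'} → κ)
    refine ⟨n + N', fun χ => ?_⟩
    obtain ⟨w, hwn, hw0, hw⟩ := hn (fun y z => χ (y ++ z.1))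
    obtain ⟨g, post, rfl⟩ := exists_decomp w hw0
    have hw' : ∀ a b z, z.length < N' →
        χ (g ++ a :: (post.map (fun o => o.getD a) ++ z)) =
        χ (g ++ b :: (post.map (fun o => o.getD b) ++ z)) := by
      intro a b z hz
      have := congrFun (hw a b) ⟨z, hz⟩
      simpa [Function.comp_def] using this
    by_cases hk0 : 0 < d (χ g)
    swap
    · refine ⟨χ g, Emb.idE, ?_, ?_⟩
      · intro γ ι x hx; omega
      · intro x hx; omega
    obtain ⟨a0⟩ := ‹Nonempty β›
    obtain ⟨k, φ', hB, hφ⟩ := hNf (χ g) hk0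
      (fun z => χ (g ++ a0 :: (post.map (fun o => o.getD a0) ++ z)))
    have hlen : g.length + 1 + post.length = n := by
      rw [← hwn]; simp; omega
    by_cases hk : k = χ g
    · subst hk
      rw [Function.update_self] at hB hφ
      refine ⟨χ g, Emb.cons g post φ', ?_, ?_⟩
      · have := Bd.cons g post hB
        refine this.mono (by omega) ?_
        have := hle (χ g); omega
      · intro x hx
        cases x with
        | nil => rw [Emb.cons_nil]; simp
        | cons a y =>
          have hy : y.length < d (χ g) - 1 := by simp at hx; omega
          have h1 : (φ'.ev id y).length < N' := lt_of_lt_of_le (hB _ _ _ hy) (hle _)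
          rw [Emb.cons_cons]
          have h2 : (fun o : Option β => o.elim a id) = fun o => o.getD a := by
            funext o; cases o <;> rfl
          rw [h2, List.map_id, hw' a a0 _ h1]
          exact hφ y hy
    · rw [Function.update_of_ne hk] at hB hφ
      refine ⟨k, (Emb.pre (g ++ a0 :: post.map (fun o => o.getD a0))).comp φ', ?_, ?_⟩
      · refine ((Bd.pre _ _).comp hB).mono le_rfl ?_
        have := hle (χ g)
        simp; omega
      · intro x hx
        rw [Emb.comp_ev, Emb.pre_ev, List.map_id]
        have := hφ x hx
        simpa using this

lemma CS' (β κ : Type) [Finite β] [Nonempty β] [Finite κ] (n : ℕ) :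
    ∃ N : ℕ, ∀ χ : List β → κ, ∃ (k : κ) (φ : Emb β), Bd φ n N ∧
      ∀ x : List β, x.length < n → χ (φ.ev id x) = k := by
  have := Fintype.ofFinite κ
  obtain ⟨N, hN⟩ := CS β κ _ (fun _ => n) rfl
  exact ⟨N, hN⟩

def liftn {α : Type} (T : Emb α) : ℕ → Emb α
  | 0 => T
  | j + 1 => Emb.lift (liftn T j)

lemma liftn_append {α γ : Type} (T : Emb α) (ι : α → γ) (c y : List γ) :
    (liftn T c.length).ev ι (c ++ y) = c ++ T.ev ι y := by
  induction c with
  | nil => rfl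
  | cons a c ih => simp [liftn, Emb.lift_cons, ih]

lemma liftn_short {α γ : Type} (T : Emb α) (ι : α → γ) (hT : T.ev ι [] = []) (j : ℕ) :
    ∀ c : List γ, c.length ≤ j → (liftn T j).ev ι c = c := by
  induction j with
  | zero => intro c hc; simp at hc; subst hc; exact hT
  | succ j ih =>
    intro c hc
    cases c with
    | nil => rfl
    | cons a c => simp at hc; simp [liftn, Emb.lift_cons, ih c hc]

lemma Bd.liftn {α : Type} {T : Emb α} {n N : ℕ} (h : Bd T n N) (j : ℕ) :
    Bd (liftn T j) (n + j) (N + j) := by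
  induction j with
  | zero => exact h
  | succ j ih => exact Bd.lift ih

lemma GR (α κ : Type) [Finite α] [Finite κ] (j : ℕ) : ∀ n : ℕ, ∃ N : ℕ,
    ∀ χ : List (Option α) → κ, ∃ ψ : Emb α, Bd ψ n N ∧ ∀ c : List α, c.length < j →
      ∀ u u' : List (Option α), c.length + 1 + u.length < n → c.length + 1 + u'.length < n →
        χ (ψ.ev some (c.map some ++ none :: u)) = χ (ψ.ev some (c.map some ++ none :: u')) := by
  induction j with
  | zero =>
    intro n
    refine ⟨n, fun χ => ⟨Emb.idE, Bd.idE n, ?_⟩⟩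
    intro c hc; simp at hc
  | succ j ih =>
    intro n
    obtain ⟨M, hM⟩ := CS' (Option α) ((Fin j → α) → κ) n
    obtain ⟨N, hN⟩ := ih (M + 1 + j)
    refine ⟨N, fun χ => ?_⟩
    obtain ⟨ψ, hB, hψ⟩ := hN χ
    obtain ⟨k, φ, hBφ, hφ⟩ := hM (fun y f => χ (ψ.ev some ((List.ofFn f).map some ++ none :: y)))
    have hBT : Bd (liftn (Emb.zero φ) j) (n + 1 + j) (M + 1 + j) := hBφ.zero.liftn j
    refine ⟨ψ.comp (liftn (Emb.zero φ) j), (hB.comp hBT).mono (by omega) le_rfl, ?_⟩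
    intro c hc u u' hu hu'
    rw [Emb.comp_ev, Emb.comp_ev]
    rcases Nat.lt_or_ge c.length j with hcj | hcj
    · have aux : ∀ u : List (Option α), c.length + 1 + u.length < n →
          ∃ z, (liftn (Emb.zero φ) j).ev some (c.map some ++ none :: u) =
            c.map some ++ none :: z ∧ c.length + 1 + z.length < M + 1 + j := by
        intro u hu
        obtain ⟨z, hz⟩ := (liftn (Emb.zero φ) j).left some (c.map some) none u
        rw [liftn_short _ _ rfl _ (c.map some) (by simpa using hcj.le)] at hz
        refine ⟨z, hz, ?_⟩
        have := hBT _ some (c.map some ++ none :: u) (by simp; omega)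
        rw [hz] at this
        simp at this; omega
      obtain ⟨z, hz, hzl⟩ := aux u hu
      obtain ⟨z', hz', hzl'⟩ := aux u' hu'
      rw [hz, hz']
      exact hψ c hcj z z' hzl hzl'
    · have hcj' : c.length = j := by omega
      subst hcj'
      have h0 : (fun o : Option (Option α) => o.elim none id) = fun o => o.getD none := by
        funext o; cases o <;> rfl
      have aux : ∀ u : List (Option α), c.length + 1 + u.length < n →
          χ (ψ.ev some ((liftn (Emb.zero φ) c.length).ev some (c.map some ++ none :: u))) =
          k (fun i => c.get i) := by
        intro u hu
        have h1 := liftn_append (Emb.zero φ) some (c.map some) (none :: u)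
        rw [List.length_map] at h1
        rw [h1, Emb.zero_cons]
        have h2 : (fun o : Option α => o.elim none some) = id := by
          funext o; cases o <;> rfl
        rw [h2]
        have h3 := congrFun (hφ u (by omega)) (fun i => c.get i)
        rw [← h3]
        simp only [List.ofFn_get]
      rw [aux u hu, aux u' hu']

lemma lemA (α : Type) [Finite α] (hP : ∀ δ : ℝ, 0 < δ → P α δ) (δ : ℝ) (hδ : 0 < δ) :
    ∃ θ : ℝ, 0 < θ ∧ ∀ n : ℕ, ∃ N : ℕ,
      ∀ (Ω : Type) [Fintype Ω] (p : Ω → ℝ) (X : Ω → Set (List α)),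
      (∀ ω, 0 ≤ p ω) → ∑ ω, p ω ≤ 1 →
      (∀ x : List α, x.length < N → δ ≤ ∑ ω, p ω * ind (x ∈ X ω)) →
      ∃ (ψ : Emb α) (c : List α), Bd ψ (c.length + 1 + n) N ∧
        ∀ u : List (Option α), u.length < n →
        θ ≤ ∑ ω, p ω * ind (LineIn (ψ.ev some (c.map some ++ none :: u)) (X ω)) := by
  obtain ⟨J, θ, hθ, hPL⟩ := PL (half_pos hδ) (hP _ (half_pos hδ))
  refine ⟨θ, hθ, fun n => ?_⟩
  obtain ⟨N, hN⟩ := GR α Prop J (J + 1 + n)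
  refine ⟨N, fun Ω _ p X hp hs hd => ?_⟩
  obtain ⟨ψ, hB, hψ⟩ := hN (fun w => θ ≤ ∑ ω, p ω * ind (LineIn w (X ω)))
  obtain ⟨w, hw0, hwJ, hw⟩ := hPL Ω p (fun ω => {x | ψ.ev id x ∈ X ω}) hp hs (by
    intro x hx
    have := hd (ψ.ev id x) (hB _ _ _ (by omega))
    rw [mul_div_cancel₀ _ two_ne_zero]
    simpa using this)
  have hw' : θ ≤ ∑ ω, p ω * ind (LineIn (ψ.ev some w) (X ω)) := by
    simpa only [ψ.lineIn_iff w hw0] using hw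
  obtain ⟨c, u0, rfl⟩ := exists_decomp w hw0
  simp at hwJ
  refine ⟨ψ, c, hB.mono (by omega) le_rfl, fun u hu => ?_⟩
  have := hψ c (by omega) u0 u (by omega) (by omega)
  simp only [eq_iff_iff] at this
  exact this.1 hw'

lemma MD (α : Type) [Finite α] (hP : ∀ δ : ℝ, 0 < δ → P α δ) (n : ℕ) : ∀ δ : ℝ, 0 < δ →
    ∃ N : ℕ, ∀ (Ω : Type) [Fintype Ω] (p : Ω → ℝ) (X : Ω → Set (List α)),
      (∀ ω, 0 ≤ p ω) → ∑ ω, p ω ≤ 1 →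
      (∀ x : List α, x.length < N → δ ≤ ∑ ω, p ω * ind (x ∈ X ω)) →
      ∃ ω, 0 < p ω ∧ ∃ ρ : Emb α, Bd ρ (n + 1) N ∧
        ∀ x : List α, x.length ≤ n → ρ.ev id x ∈ X ω := by
  induction n with
  | zero =>
    intro δ hδ
    refine ⟨1, fun Ω _ p X hp hs hd => ?_⟩
    have h1 := hd [] (by simp)
    obtain ⟨ω, _, hω⟩ := Finset.exists_lt_of_sum_lt (s := Finset.univ) (f := fun _ : Ω => (0:ℝ))
      (g := fun ω => p ω * ind ([] ∈ X ω)) (by simpa using lt_of_lt_of_le hδ h1)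
    have hpω : 0 < p ω := by
      rcases (hp ω).lt_or_eq with h | h
      · exact h
      · rw [← h] at hω; simp at hω
    refine ⟨ω, hpω, Emb.idE, Bd.idE 1, ?_⟩
    intro x hx
    simp at hx
    subst hx
    exact ind_pos (pos_of_mul_pos_right hω hpω.le)
  | succ n ih =>
    intro δ hδ
    obtain ⟨θ, hθ, hA⟩ := lemA α hP δ hδ
    obtain ⟨M, hM⟩ := ih θ hθ
    obtain ⟨N, hN⟩ := hA M
    refine ⟨N, fun Ω _ p X hp hs hd => ?_⟩
    obtain ⟨ψ, c, hB, hψ⟩ := hN Ω p X hp hs hd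
    obtain ⟨ω, hω, ρ, hBρ, hρ⟩ := hM Ω p
      (fun ω => {u | LineIn (ψ.ev some (c.map some ++ none :: u.map some)) (X ω)}) hp hs (by
        intro x hx
        have := hψ (x.map some) (by simpa using hx)
        simpa using this)
    refine ⟨ω, hω, ψ.comp ((Emb.pre c).comp (Emb.lift ρ)), ?_, ?_⟩
    · refine hB.comp ?_
      refine Bd.mono ((Bd.pre c _).comp hBρ.lift) le_rfl ?_
      omega
    · intro x hx
      rw [Emb.comp_ev, Emb.comp_ev, Emb.pre_ev, List.map_id]
      cases x with
      | nil =>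
        have := (hρ [] (by simp)).1
        rw [ψ.root_ev] at this
        simpa [Emb.lift_nil] using this
      | cons a y =>
        have := (hρ y (by simpa using hx)).2 a
        rw [ψ.map_getD] at this
        simpa [Emb.lift_cons, Function.comp_def] using this

end CSD


namespace CSD

/-! ### Averages over words of a given length -/

section Av

variable {Γ : Type} [Fintype Γ]

noncomputable def Av : ℕ → (List Γ → ℝ) → ℝ
  | 0, F => F []
  | n + 1, F => (∑ a : Γ, Av n (fun s => F (a :: s))) / (Fintype.card Γ : ℝ)

lemma Av_zero (F : List Γ → ℝ) : Av 0 F = F [] := rfl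
lemma Av_succ (n : ℕ) (F : List Γ → ℝ) :
    Av (n + 1) F = (∑ a : Γ, Av n (fun s => F (a :: s))) / (Fintype.card Γ : ℝ) := rfl

lemma Av_one (F : List Γ → ℝ) : Av 1 F = (∑ a : Γ, F [a]) / (Fintype.card Γ : ℝ) := rfl

lemma Av_congr {n : ℕ} : ∀ {F G : List Γ → ℝ}, (∀ z, z.length = n → F z = G z) →
    Av n F = Av n G := by
  induction n with
  | zero => intro F G h; exact h [] rfl
  | succ n ih =>
    intro F G h
    rw [Av_succ, Av_succ]
    congr 1
    refine Finset.sum_congr rfl fun a _ => ih fun z hz => h _ (by simp [hz])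

lemma Av_mono {n : ℕ} : ∀ {F G : List Γ → ℝ}, (∀ z, z.length = n → F z ≤ G z) →
    Av n F ≤ Av n G := by
  induction n with
  | zero => intro F G h; exact h [] rfl
  | succ n ih =>
    intro F G h
    rw [Av_succ, Av_succ]
    gcongr with a _
    exact ih fun z hz => h _ (by simp [hz])

lemma Av_append (n m : ℕ) : ∀ F : List Γ → ℝ,
    Av (n + m) F = Av n (fun c => Av m (fun s => F (c ++ s))) := by
  induction n with
  | zero => intro F; simp [Av_zero]
  | succ n ih =>
    intro F
    rw [Nat.succ_add, Av_succ, Av_succ]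
    congr 1
    refine Finset.sum_congr rfl fun a _ => ?_
    rw [ih]
    rfl

lemma Av_sum {ι : Type*} (s : Finset ι) (n : ℕ) : ∀ (f : ι → List Γ → ℝ),
    Av n (fun z => ∑ i ∈ s, f i z) = ∑ i ∈ s, Av n (f i) := by
  induction n with
  | zero => intro f; rfl
  | succ n ih =>
    intro f
    simp only [Av_succ]
    simp only [ih]
    rw [Finset.sum_comm, Finset.sum_div]

lemma Av_mul_left (n : ℕ) (c : ℝ) : ∀ F : List Γ → ℝ, Av n (fun z => c * F z) = c * Av n F := by
  induction n with
  | zero => intro F; rfl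
  | succ n ih =>
    intro F
    simp only [Av_succ]
    simp only [ih]
    rw [← Finset.mul_sum, mul_div_assoc]

lemma Av_mul_right (n : ℕ) (c : ℝ) (F : List Γ → ℝ) : Av n (fun z => F z * c) = Av n F * c := by
  simp only [mul_comm _ c]; exact Av_mul_left n c F

lemma Av_div (n : ℕ) (c : ℝ) (F : List Γ → ℝ) : Av n (fun z => F z / c) = Av n F / c := by
  simp only [div_eq_mul_inv]; exact Av_mul_right n _ F

lemma Av_add (n : ℕ) : ∀ F G : List Γ → ℝ, Av n (fun z => F z + G z) = Av n F + Av n G := by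
  induction n with
  | zero => intro F G; rfl
  | succ n ih =>
    intro F G
    simp only [Av_succ]
    simp only [ih]
    rw [Finset.sum_add_distrib, add_div]

lemma Av_neg (n : ℕ) (F : List Γ → ℝ) : Av n (fun z => - F z) = - Av n F := by
  have := Av_mul_left n (-1) F
  simpa using this

lemma Av_sub (n : ℕ) (F G : List Γ → ℝ) : Av n (fun z => F z - G z) = Av n F - Av n G := by
  simp only [sub_eq_add_neg]
  rw [Av_add, Av_neg]

lemma Av_const [Nonempty Γ] (n : ℕ) (c : ℝ) : Av n (fun _ : List Γ => c) = c := by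
  induction n with
  | zero => rfl
  | succ n ih =>
    rw [Av_succ]
    simp only [ih]
    have : (Fintype.card Γ : ℝ) ≠ 0 := by simp
    simp [this]

lemma Av_le [Nonempty Γ] {n : ℕ} {F : List Γ → ℝ} {c : ℝ} (h : ∀ z, z.length = n → F z ≤ c) :
    Av n F ≤ c := by
  rw [← Av_const (Γ := Γ) n c]; exact Av_mono h

lemma le_Av [Nonempty Γ] {n : ℕ} {F : List Γ → ℝ} {c : ℝ} (h : ∀ z, z.length = n → c ≤ F z) :
    c ≤ Av n F := by
  rw [← Av_const (Γ := Γ) n c]; exact Av_mono h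

lemma Av_nonneg {n : ℕ} {F : List Γ → ℝ} (h : ∀ z, z.length = n → 0 ≤ F z) : 0 ≤ Av n F := by
  have := Av_mul_left n 0 F
  simp only [zero_mul] at this
  rw [← this]; exact Av_mono h

lemma Av_abs (n : ℕ) (F : List Γ → ℝ) : |Av n F| ≤ Av n (fun z => |F z|) := by
  rw [abs_le]
  constructor
  · rw [← Av_neg]; exact Av_mono fun z _ => neg_abs_le _
  · exact Av_mono fun z _ => le_abs_self _

lemma Av_comm {Δ : Type} [Fintype Δ] (n m : ℕ) : ∀ F : List Γ → List Δ → ℝ,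
    Av n (fun x => Av m (fun y => F x y)) = Av m (fun y => Av n (fun x => F x y)) := by
  induction n with
  | zero => intro F; rfl
  | succ n ih =>
    intro F
    simp only [Av_succ]
    simp only [ih]
    rw [Av_div, Av_sum]

lemma Av_exists [Nonempty Γ] {n : ℕ} {F : List Γ → ℝ} {c : ℝ} (h : c ≤ Av n F) :
    ∃ z, z.length = n ∧ c ≤ F z := by
  induction n generalizing F with
  | zero => exact ⟨[], rfl, h⟩
  | succ n ih =>
    rw [Av_succ, le_div_iff₀ (by simp [Fintype.card_pos])] at h
    obtain ⟨a, _, ha⟩ := Finset.exists_le_of_sum_le (s := (Finset.univ : Finset Γ))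
      (f := fun _ => c) (g := fun a => Av n (fun s => F (a :: s))) (by simp)
      (by simpa [mul_comm] using h)
    obtain ⟨z, hz, hz'⟩ := ih ha
    exact ⟨a :: z, by simp [hz], hz'⟩

lemma Av_eq_sum (n : ℕ) : ∀ F : List Γ → ℝ,
    Av n F = (∑ v : Fin n → Γ, F (List.ofFn v)) / (Fintype.card Γ : ℝ) ^ n := by
  induction n with
  | zero => intro F; simp [Av_zero]
  | succ n ih =>
    intro F
    rw [Av_succ]
    have : ∑ v : Fin (n + 1) → Γ, F (List.ofFn v) =
        ∑ a : Γ, ∑ v : Fin n → Γ, F (a :: List.ofFn v) := by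
      rw [← Fintype.sum_prod_type' (f := fun a v => F (a :: List.ofFn v))]
      symm
      refine Fintype.sum_equiv (Fin.consEquiv (fun _ => Γ)) _ _ fun x => ?_
      simp [Fin.consEquiv, List.ofFn_succ]
    rw [this]
    simp only [ih]
    rw [← Finset.sum_div, div_div, pow_succ]

lemma Av_take [Nonempty Γ] (n m : ℕ) (F : List Γ → ℝ) :
    Av (n + m) (fun z => F (z.take n)) = Av n F := by
  rw [Av_append]
  refine Av_congr fun c hc => ?_
  rw [← Av_const (Γ := Γ) m (F c)]
  refine Av_congr fun s _ => ?_
  rw [← hc, List.take_left]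

lemma sum_abs_Av {Ω : Type} [Fintype Ω] (p : Ω → ℝ) (hp : ∀ ω, 0 ≤ p ω) (n : ℕ)
    (f : List Γ → Ω → ℝ) :
    ∑ ω, p ω * |Av n (fun z => f z ω)| ≤ Av n (fun z => ∑ ω, p ω * |f z ω|) := by
  rw [Av_sum]
  refine Finset.sum_le_sum fun ω _ => ?_
  rw [Av_mul_left]
  exact mul_le_mul_of_nonneg_left (Av_abs _ _) (hp ω)

/-! ### Energy -/

def Harm (D : ℕ) (G : List Γ → ℝ) : Prop :=
  ∀ (c : List Γ) (r : ℕ), c.length + r ≤ D → G c = Av r (fun z => G (c ++ z))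

lemma Harm_ext (D : ℕ) (F : List Γ → ℝ) :
    Harm D (fun c => Av (D - c.length) (fun z => F (c ++ z))) := by
  intro c r h
  have h1 : D - c.length = r + (D - c.length - r) := by omega
  dsimp only
  rw [h1, Av_append]
  refine Av_congr fun z hz => ?_
  have h2 : D - (c ++ z).length = D - c.length - r := by simp [hz]; omega
  rw [h2]
  simp [List.append_assoc]

noncomputable def En (G : List Γ → ℝ) (n : ℕ) : ℝ := Av n (fun c => G c ^ 2)

lemma En_diff [Nonempty Γ] {D : ℕ} {G : List Γ → ℝ} (hG : Harm D G) {n r : ℕ} (h : n + r ≤ D) :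
    En G (n + r) - En G n = Av n (fun c => Av r (fun z => (G (c ++ z) - G c) ^ 2)) := by
  unfold En
  rw [Av_append, ← Av_sub]
  refine Av_congr fun c hc => ?_
  have h1 : ∀ z, (G (c ++ z) - G c) ^ 2 = G (c ++ z) ^ 2 + (-2 * G c) * G (c ++ z) + G c ^ 2 := by
    intro z; ring
  simp only [h1]
  rw [Av_add, Av_add, Av_mul_left, Av_const, ← hG c r (by omega)]
  ring

lemma En_nonneg (G : List Γ → ℝ) (n : ℕ) : 0 ≤ En G n := Av_nonneg fun z _ => sq_nonneg _

lemma En_le [Nonempty Γ] {G : List Γ → ℝ} {B : ℝ} (n : ℕ) (h : ∀ z, |G z| ≤ B) :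
    En G n ≤ B ^ 2 := Av_le fun z _ => by
  rw [← sq_abs]; gcongr; exact h z

lemma En_mono [Nonempty Γ] {D : ℕ} {G : List Γ → ℝ} (hG : Harm D G) {n m : ℕ} (h : n ≤ m)
    (hm : m ≤ D) : En G n ≤ En G m := by
  obtain ⟨r, rfl⟩ := Nat.exists_eq_add_of_le h
  have := En_diff hG hm
  have h2 : 0 ≤ Av n (fun c => Av r (fun z => (G (c ++ z) - G c) ^ 2)) :=
    Av_nonneg fun _ _ => Av_nonneg fun _ _ => sq_nonneg _
  linarith

lemma abs_le_quad {ρ : ℝ} (hρ : 0 < ρ) (u : ℝ) : |u| ≤ ρ / 2 + (1 / (2 * ρ)) * u ^ 2 := by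
  have h : 0 ≤ (|u| - ρ) ^ 2 / (2 * ρ) := by positivity
  have h2 : (|u| - ρ) ^ 2 / (2 * ρ) = (1 / (2 * ρ)) * u ^ 2 - |u| + ρ / 2 := by
    rw [sub_sq, sq_abs]; field_simp
  linarith

lemma Av_abs_le [Nonempty Γ] {D : ℕ} {G : List Γ → ℝ} (hG : Harm D G) {n r : ℕ}
    (h : n + r ≤ D) {ρ : ℝ} (hρ : 0 < ρ) :
    Av n (fun c => Av r (fun z => |G (c ++ z) - G c|)) ≤
      ρ / 2 + (1 / (2 * ρ)) * (En G (n + r) - En G n) := by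
  rw [En_diff hG h]
  calc _ ≤ Av n (fun c => Av r (fun z => ρ / 2 + (1 / (2 * ρ)) * (G (c ++ z) - G c) ^ 2)) :=
        Av_mono fun c _ => Av_mono fun z _ => abs_le_quad hρ _
    _ = _ := by simp only [Av_add, Av_mul_left, Av_const]

lemma pigeon_diff (f : ℕ → ℝ) (T : ℕ) (hT : 0 < T) (K : ℝ) (h0 : 0 ≤ f 0) (hK : f T ≤ K) :
    ∃ i < T, f (i + 1) - f i ≤ K / T := by
  have h := Finset.sum_range_sub f T
  by_contra hcon
  push Not at hcon
  have h2 : ∑ i ∈ Finset.range T, K / T < ∑ i ∈ Finset.range T, (f (i + 1) - f i) := by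
    apply Finset.sum_lt_sum_of_nonempty
    · exact Finset.nonempty_range_iff.2 hT.ne'
    · intro i hi; exact hcon i (Finset.mem_range.1 hi)
  have h3 : (T : ℝ) ≠ 0 := by positivity
  rw [h] at h2
  simp at h2
  rw [mul_div_cancel₀ _ h3] at h2
  linarith

end Av

end CSD


namespace CSD

def kap {α : Type} (i : α) : Bool → Option α
  | true => none
  | false => some i

lemma getD_eq_cases {α : Type} (i : α) {a a' : Option α} (h : a.getD i = a'.getD i) :
    a = a' ∨ ∃ b b', a = kap i b ∧ a' = kap i b' := by
  cases a with
  | none =>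
    cases a' with
    | none => left; rfl
    | some c =>
      right
      simp at h
      subst h
      exact ⟨true, false, rfl, rfl⟩
  | some c =>
    cases a' with
    | none =>
      right
      simp at h
      subst h
      exact ⟨false, true, rfl, rfl⟩
    | some c' =>
      left
      simp at h
      rw [h]

lemma map_kap {α γ : Type} (i : α) (ι : Option α → γ) (h : ι none = ι (some i))
    (z z' : List Bool) (hz : z.length = z'.length) :
    (z.map (kap i)).map ι = (z'.map (kap i)).map ι := by
  have h1 : ∀ z : List Bool, (z.map (kap i)).map ι = List.replicate z.length (ι none) := by
    intro z
    rw [List.map_map, List.eq_replicate_iff]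
    refine ⟨by simp, ?_⟩
    intro b hb
    obtain ⟨c, _, rfl⟩ := List.mem_map.1 hb
    cases c
    · exact h.symm
    · rfl
  rw [h1, h1, hz]

lemma map_some_kap {α γ : Type} (i : α) (ι : Option α → γ) (a : γ) (z : List Bool) :
    (z.map (fun b => some (kap i b))).map (fun o : Option (Option α) => o.elim a ι) =
      (z.map (kap i)).map ι := by
  rw [List.map_map, List.map_map]; rfl

lemma S_lem (α : Type) [Fintype α] (i : α) (M : ℕ) : ∀ ε : ℝ, 0 < ε →
    ∃ N D : ℕ, ∀ (Ω : Type) [Fintype Ω] (p : Ω → ℝ) (h : List (Option α) → Ω → ℝ),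
      (∀ ω, 0 ≤ p ω) → ∑ ω, p ω ≤ 1 → (∀ z ω, |h z ω| ≤ 2) →
      ∃ e : List Bool → Emb (Option α),
        (∀ Z Z' : List Bool, Z.length = D → Z'.length = D →
          ∀ (γ : Type) (ι : Option α → γ), ι none = ι (some i) → ∀ x,
            (e Z).ev ι x = (e Z').ev ι x) ∧
        (∀ Z : List Bool, Z.length = D → Bd (e Z) M N) ∧
        (∀ x x' : List (Option α), x.length < M →
          x.map (fun o => o.getD i) = x'.map (fun o => o.getD i) →
          ∑ ω, p ω * |Av D (fun Z => h ((e Z).ev id x) ω) - Av D (fun Z => h ((e Z).ev id x') ω)|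
            ≤ ε) := by
  induction M with
  | zero =>
    intro ε hε
    refine ⟨0, 0, fun Ω _ p h _ _ _ => ⟨fun _ => Emb.idE, ?_, ?_, ?_⟩⟩
    · intros; rfl
    · intros; exact Bd.idE 0
    · intro x x' hx; simp at hx
  | succ M ih =>
    intro ε hε
    set W := (finite_lt (Option α) M).toFinset with hW
    have hmW : ∀ x, x ∈ W ↔ x.length < M := by intro w; simp [hW]
    obtain ⟨R, hR⟩ := exists_nat_gt (64 * (W.card : ℝ) / ε ^ 2)
    have hR0 : (0:ℝ) < R := lt_of_le_of_lt (by positivity) hR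
    have hR0' : 0 < R := by exact_mod_cast hR0
    set K : ℝ := (Fintype.card (Option α) : ℝ) ^ R with hK
    have hK0 : 0 < K := by
      have : 0 < Fintype.card (Option α) := Fintype.card_pos
      positivity
    obtain ⟨N', D', ihh⟩ := ih (ε / (2 * K)) (by positivity)
    refine ⟨R + N', R + D', ?_⟩
    intro Ω _ p h hp hs hh
    obtain ⟨e', ha, hb, hc⟩ := ihh (Ω × (Fin R → Option α)) (fun q => p q.1 / K)
      (fun z q => h (List.ofFn q.2 ++ z) q.1) (fun q => div_nonneg (hp _) hK0.le) (by
        rw [Fintype.sum_prod_type]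
        simp only [Finset.sum_const, Finset.card_univ, Fintype.card_pi, Finset.prod_const,
          Fintype.card_fin, nsmul_eq_mul]
        refine le_trans (le_of_eq ?_) hs
        refine Finset.sum_congr rfl fun ω _ => ?_
        push_cast
        field_simp
        rw [hK, mul_comm]) (fun z q => hh _ _)
    -- the consequence for one initial part
    have hc1 : ∀ (π : List (Option α)), π.length = R → ∀ x x' : List (Option α), x.length < M →
        x.map (fun o => o.getD i) = x'.map (fun o => o.getD i) →
        ∑ ω, p ω * |Av D' (fun Z => h (π ++ (e' Z).ev id x) ω) -
          Av D' (fun Z => h (π ++ (e' Z).ev id x') ω)| ≤ ε / 2 := by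
      intro π hπ x x' hx hxx
      subst hπ
      have h1 := hc x x' hx hxx
      rw [Fintype.sum_prod_type_right] at h1
      have h2 := Finset.single_le_sum (s := Finset.univ)
        (f := fun v : Fin π.length → Option α => ∑ ω, p ω / K *
          |Av D' (fun Z => h (List.ofFn v ++ (e' Z).ev id x) ω) -
          Av D' (fun Z => h (List.ofFn v ++ (e' Z).ev id x') ω)|)
        (fun v _ => Finset.sum_nonneg fun ω _ =>
          mul_nonneg (div_nonneg (hp ω) hK0.le) (abs_nonneg _))
        (Finset.mem_univ (fun j => π.get j))
      have h3 := h2.trans h1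
      simp only [List.ofFn_get] at h3
      have h4 : ∀ ω, p ω / K * |Av D' (fun Z => h (π ++ (e' Z).ev id x) ω) -
          Av D' (fun Z => h (π ++ (e' Z).ev id x') ω)| = K⁻¹ * (p ω *
          |Av D' (fun Z => h (π ++ (e' Z).ev id x) ω) -
          Av D' (fun Z => h (π ++ (e' Z).ev id x') ω)|) := by
        intro ω; field_simp
      simp only [h4] at h3
      rw [← Finset.mul_sum, inv_mul_le_iff₀ hK0] at h3
      refine h3.trans (le_of_eq ?_)
      field_simp
    -- harmonic functions
    set Hf : List (Option α) → Ω → List Bool → ℝ := fun x ω v =>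
      Av D' (fun Z => h (v.map (kap i) ++ (e' Z).ev id x) ω) with hHf
    set H : List (Option α) → Ω → List Bool → ℝ := fun x ω v =>
      Av (R - v.length) (fun z => Hf x ω (v ++ z)) with hH
    have hHarm : ∀ x ω, Harm R (H x ω) := fun x ω => Harm_ext R (Hf x ω)
    have hHb : ∀ x ω v, |H x ω v| ≤ 2 := by
      intro x ω v
      refine (Av_abs _ _).trans (Av_le fun z _ => (Av_abs _ _).trans (Av_le fun z _ => hh _ _))
    obtain ⟨q, hq, hqE⟩ := pigeon_diff (fun n => ∑ x ∈ W, ∑ ω, p ω * En (H x ω) n) R hR0'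
      (4 * W.card)
      (Finset.sum_nonneg fun x _ => Finset.sum_nonneg fun ω _ =>
        mul_nonneg (hp ω) (En_nonneg _ _))
      (by
        calc ∑ x ∈ W, ∑ ω, p ω * En (H x ω) R ≤ ∑ x ∈ W, (4:ℝ) := by
              refine Finset.sum_le_sum fun x _ => ?_
              calc ∑ ω, p ω * En (H x ω) R ≤ ∑ ω, p ω * 4 := by
                    refine Finset.sum_le_sum fun ω _ => ?_
                    refine mul_le_mul_of_nonneg_left ?_ (hp ω)
                    have := En_le (G := H x ω) R (hHb x ω)
                    linarith
                _ ≤ 4 := by rw [← Finset.sum_mul]; linarith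
          _ = 4 * W.card := by simp [mul_comm])
    have hqE' : ∀ x ∈ W, ∑ ω, p ω * (En (H x ω) (q + 1) - En (H x ω) q) ≤ 4 * W.card / R := by
      intro x hx
      have h1 : ∑ x ∈ W, ∑ ω, p ω * (En (H x ω) (q + 1) - En (H x ω) q) ≤ 4 * W.card / R := by
        simpa [mul_sub, Finset.sum_sub_distrib] using hqE
      refine le_trans ?_ h1
      refine Finset.single_le_sum
        (f := fun x => ∑ ω, p ω * (En (H x ω) (q + 1) - En (H x ω) q)) (fun x _ => ?_) hx
      refine Finset.sum_nonneg fun ω _ => mul_nonneg (hp ω) ?_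
      have := En_mono (hHarm x ω) (Nat.le_succ q) hq
      exact sub_nonneg.2 this
    obtain ⟨m, rfl⟩ : ∃ m, R = q + 1 + m := Nat.exists_eq_add_of_le hq
    set e : List Bool → Emb (Option α) := fun Z =>
      Emb.cons ((Z.take q).map (kap i)) (((Z.drop (q + 1)).take m).map (fun b => some (kap i b)))
        (e' (Z.drop (q + 1 + m))) with he
    -- the main formula
    have hform : ∀ (a : Option α) (y : List (Option α)) (ω : Ω),
        Av (q + 1 + m + D') (fun Z => h ((e Z).ev id (a :: y)) ω) =
        Av q (fun v => Av m (fun s => Av D' (fun Z' =>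
          h ((v.map (kap i) ++ a :: s.map (kap i)) ++ (e' Z').ev id y) ω))) := by
      intro a y ω
      rw [Av_append, Av_append, Av_append]
      refine Av_congr fun v hv => ?_
      rw [← Av_const (Γ := Bool) 1 (Av m (fun s => Av D' (fun Z' =>
          h ((v.map (kap i) ++ a :: s.map (kap i)) ++ (e' Z').ev id y) ω)))]
      refine Av_congr fun b hb' => Av_congr fun s hs' => Av_congr fun Z' _ => ?_
      have e1 : (v ++ b ++ s ++ Z').take q = v := by
        rw [List.append_assoc, List.append_assoc, ← hv, List.take_left]
      have e2 : ((v ++ b ++ s ++ Z').drop (q + 1)).take m = s := by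
        rw [List.append_assoc, ← hv, ← hb', ← List.length_append, List.drop_left, ← hs',
          List.take_left]
      have e3 : (v ++ b ++ s ++ Z').drop (q + 1 + m) = Z' := by
        rw [← hv, ← hb', ← hs', ← List.length_append, ← List.length_append, List.drop_left]
      simp only [he]
      rw [e1, e2, e3, Emb.cons_cons, map_some_kap]
      simp
    refine ⟨e, ?_, ?_, ?_⟩
    · intro Z Z' hZ hZ' γ ι hι x
      cases x with
      | nil =>
        simp only [he, Emb.cons_nil]
        exact map_kap i ι hι _ _ (by simp [hZ, hZ'])
      | cons a y =>
        simp only [he, Emb.cons_cons]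
        rw [map_some_kap, map_some_kap, map_kap i ι hι (Z.take q) (Z'.take q) (by simp [hZ, hZ']),
          map_kap i ι hι ((Z.drop (q + 1)).take m) ((Z'.drop (q + 1)).take m)
            (by simp [hZ, hZ']), ha (Z.drop (q + 1 + m)) (Z'.drop (q + 1 + m)) (by simp [hZ])
            (by simp [hZ']) γ ι hι y]
    · intro Z hZ
      have := Bd.cons ((Z.take q).map (kap i))
        (((Z.drop (q + 1)).take m).map (fun b => some (kap i b)))
        (hb (Z.drop (q + 1 + m)) (by simp [hZ]))
      refine this.mono le_rfl ?_
      simp [hZ]; omega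
    · intro x x' hx hxx
      cases x with
      | nil =>
        have : x' = [] := by simpa using hxx.symm
        subst this
        simp [hε.le]
      | cons a y =>
        cases x' with
        | nil => simp at hxx
        | cons a' y' =>
          simp only [List.map_cons, List.cons.injEq] at hxx
          obtain ⟨haa, hyy⟩ := hxx
          have hyM : y.length < M := by simpa using hx
          have hyl : y'.length = y.length := by
            have := congrArg List.length hyy; simpa using this.symm
          have first : ∑ ω, p ω * |Av (q + 1 + m + D') (fun Z => h ((e Z).ev id (a :: y)) ω) -
              Av (q + 1 + m + D') (fun Z => h ((e Z).ev id (a :: y')) ω)| ≤ ε / 2 := by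
            simp only [hform, ← Av_sub]
            refine (sum_abs_Av p hp q _).trans (Av_le fun v hv => ?_)
            refine (sum_abs_Av p hp m _).trans (Av_le fun s hs' => ?_)
            simp only [Av_sub]
            exact hc1 _ (by simp [hv, hs']; omega) y y' hyM hyy
          have second : ∑ ω, p ω * |Av (q + 1 + m + D') (fun Z => h ((e Z).ev id (a :: y')) ω) -
              Av (q + 1 + m + D') (fun Z => h ((e Z).ev id (a' :: y')) ω)| ≤ ε / 2 := by
            rcases getD_eq_cases i haa with rfl | ⟨b, b', rfl, rfl⟩
            · simp; positivity
            have hf2 : ∀ b ω, Av (q + 1 + m + D') (fun Z => h ((e Z).ev id (kap i b :: y')) ω) =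
                Av q (fun v => H y' ω (v ++ [b])) := by
              intro b ω
              rw [hform]
              refine Av_congr fun v hv => ?_
              simp only [hH, hHf]
              have : q + 1 + m - (v ++ [b]).length = m := by simp [hv]
              rw [this]
              refine Av_congr fun s _ => Av_congr fun Z' _ => ?_
              simp
            simp only [hf2]
            have hpt : ∀ ω, |Av q (fun v => H y' ω (v ++ [b])) - Av q (fun v => H y' ω (v ++ [b']))|
                ≤ 2 * ((ε / 4) / 2 + (1 / (2 * (ε / 4))) *
                  (En (H y' ω) (q + 1) - En (H y' ω) q)) := by
              intro ω
              have h1 := Av_abs_le (hHarm y' ω) (n := q) (r := 1) (by omega)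
                (show (0:ℝ) < ε / 4 by positivity)
              rw [← Av_sub]
              refine (Av_abs _ _).trans ?_
              refine le_trans ?_ (mul_le_mul_of_nonneg_left h1 zero_le_two)
              rw [← Av_mul_left]
              refine Av_mono fun v _ => ?_
              rw [Av_one]
              simp only [Fintype.sum_bool, Fintype.card_bool]
              have t1 := abs_nonneg (H y' ω (v ++ [true]) - H y' ω v)
              have t2 := abs_nonneg (H y' ω (v ++ [false]) - H y' ω v)
              have t3 := abs_sub_le (H y' ω (v ++ [true])) (H y' ω v) (H y' ω (v ++ [false]))
              have t4 := abs_sub_le (H y' ω (v ++ [false])) (H y' ω v) (H y' ω (v ++ [true]))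
              rw [abs_sub_comm (H y' ω v)] at t3 t4
              push_cast
              cases b <;> cases b' <;> first | (simp; linarith) | linarith
            calc _ ≤ ∑ ω, p ω * (2 * ((ε / 4) / 2 + (1 / (2 * (ε / 4))) *
                  (En (H y' ω) (q + 1) - En (H y' ω) q))) :=
                  Finset.sum_le_sum fun ω _ => mul_le_mul_of_nonneg_left (hpt ω) (hp ω)
              _ = (ε / 4) * ∑ ω, p ω + (4 / ε) *
                  ∑ ω, p ω * (En (H y' ω) (q + 1) - En (H y' ω) q) := by
                  rw [Finset.mul_sum, Finset.mul_sum, ← Finset.sum_add_distrib]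
                  refine Finset.sum_congr rfl fun ω _ => ?_
                  field_simp
              _ ≤ (ε / 4) * 1 + (4 / ε) * (4 * W.card / (q + 1 + m : ℕ)) := by
                  gcongr
                  exact hqE' y' ((hmW _).2 (by omega))
              _ ≤ ε / 2 := by
                  have hR2 : (4 / ε) * (4 * W.card / (q + 1 + m : ℕ)) ≤ ε / 4 := by
                    rw [div_lt_iff₀ (by positivity)] at hR
                    rw [div_mul_div_comm, div_le_div_iff₀ (by positivity) (by norm_num)]
                    nlinarith
                  linarith
          calc _ ≤ ∑ ω, (p ω * |Av (q + 1 + m + D') (fun Z => h ((e Z).ev id (a :: y)) ω) -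
                Av (q + 1 + m + D') (fun Z => h ((e Z).ev id (a :: y')) ω)| +
                p ω * |Av (q + 1 + m + D') (fun Z => h ((e Z).ev id (a :: y')) ω) -
                Av (q + 1 + m + D') (fun Z => h ((e Z).ev id (a' :: y')) ω)|) := by
                refine Finset.sum_le_sum fun ω _ => ?_
                rw [← mul_add]
                exact mul_le_mul_of_nonneg_left (abs_sub_le _ _ _) (hp ω)
            _ ≤ ε := by rw [Finset.sum_add_distrib]; linarith

end CSD


namespace CSD

lemma C_lem (α : Type) [Fintype α] (hP : ∀ δ : ℝ, 0 < δ → P α δ) (τ : ℝ) (hτ0 : 0 ≤ τ)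
    (hτ2 : τ ≤ 2) (hPβ : P (Option α) τ) (I : Finset α) : ∀ γ : ℝ, 0 < γ →
    ∃ N : ℕ, ∀ (Ω : Type) [Fintype Ω] (p : Ω → ℝ) (Y : Ω → Set (List (Option α)))
      (F : α → Ω → Set (List α)), (∀ ω, 0 ≤ p ω) → ∑ ω, p ω ≤ 1 →
      (∀ u : List (Option α), u.length < N → γ ≤ ∑ ω, p ω * ((ind (u ∈ Y ω) - τ) *
        ind (∀ i ∈ I, u.map (fun o => o.getD i) ∈ F i ω))) →
      ∃ ω, 0 < p ω ∧ HasLine (Y ω) N := by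
  classical
  induction I using Finset.induction_on with
  | empty =>
    intro γ hγ
    obtain ⟨N, hN⟩ := hPβ
    refine ⟨N + 1, fun Ω _ p Y F hp hs hd => ?_⟩
    have hd' : ∀ u : List (Option α), u.length < N + 1 →
        γ + τ * ∑ ω, p ω ≤ ∑ ω, p ω * ind (u ∈ Y ω) := by
      intro u hu
      have h1 := hd u hu
      have h2 : ∀ ω, p ω * ((ind (u ∈ Y ω) - τ) *
        ind (∀ i ∈ (∅ : Finset α), u.map (fun o => o.getD i) ∈ F i ω)) =
          p ω * ind (u ∈ Y ω) - τ * p ω := by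
        intro ω
        have h3 : ind (∀ i ∈ (∅ : Finset α), u.map (fun o => o.getD i) ∈ F i ω) = 1 :=
          ind_true (by simp)
        rw [h3]; ring
      simp only [h2] at h1
      rw [Finset.sum_sub_distrib, ← Finset.mul_sum] at h1
      linarith
    have hpos : 0 < ∑ ω, p ω := by
      have h1 := hd' [] (by simp)
      have h2 : ∑ ω, p ω * ind ([] ∈ Y ω) ≤ ∑ ω, p ω :=
        Finset.sum_le_sum fun ω _ => mul_le_of_le_one_right (hp ω) (ind_le_one _)
      have h3 : 0 ≤ ∑ ω, p ω := Finset.sum_nonneg fun ω _ => hp ω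
      nlinarith [mul_nonneg hτ0 h3]
    obtain ⟨ω, h1, h2⟩ := hN Ω p Y hp hpos (fun x hx => by
      have := hd' x (by omega); linarith)
    exact ⟨ω, h1, h2.mono (Nat.le_succ N)⟩
  | insert i I hi ih =>
    intro γ hγ
    obtain ⟨M, hM⟩ := ih (γ / 4) (by positivity)
    obtain ⟨M1, hM1⟩ := MD α hP M (γ / 4) (by positivity)
    set W := (finite_lt (Option α) M1).toFinset with hW
    have hmW : ∀ x, x ∈ W ↔ x.length < M1 := by intro w; simp [hW]
    obtain ⟨N, D, hS⟩ := S_lem α i M1 (γ / (4 * (W.card + 1))) (by positivity)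
    refine ⟨N, fun Ω _ p Y F hp hs hd => ?_⟩
    set h : List (Option α) → Ω → ℝ := fun u ω => (ind (u ∈ Y ω) - τ) *
        ind (∀ j ∈ I, u.map (fun o => o.getD j) ∈ F j ω) with hh
    have hh2 : ∀ z ω, |h z ω| ≤ 2 := by
      intro z ω
      simp only [hh]
      rw [abs_mul, abs_of_nonneg (ind_nonneg (∀ j ∈ I, z.map (fun o => o.getD j) ∈ F j ω))]
      have h1 : |ind (z ∈ Y ω) - τ| ≤ 2 := by
        rw [abs_le]
        have := ind_nonneg (z ∈ Y ω)
        have := ind_le_one (z ∈ Y ω)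
        constructor <;> linarith
      calc _ ≤ |ind (z ∈ Y ω) - τ| * 1 :=
            mul_le_mul_of_nonneg_left (ind_le_one _) (abs_nonneg _)
        _ ≤ 2 := by linarith
    obtain ⟨e, ha, hb, hc⟩ := hS Ω p h hp hs hh2
    set b : List (Option α) → Ω → ℝ := fun x ω => Av D (fun Z => h ((e Z).ev id x) ω) with hbdef
    have hb2 : ∀ x ω, b x ω ≤ 2 := fun x ω => Av_le fun Z _ => (le_abs_self _).trans (hh2 _ _)
    set Z0 : List Bool := List.replicate D false with hZ0
    have hZ0l : Z0.length = D := by simp [hZ0]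
    set eb : List α → List α := fun x => (e Z0).ev (fun o : Option α => o.getD i) x with heb
    have hr : ∀ (Z : List Bool), Z.length = D → ∀ x : List (Option α),
        ((e Z).ev id x).map (fun o => o.getD i) = eb (x.map (fun o => o.getD i)) := by
      intro Z hZ x
      rw [(e Z).nat]
      exact ha Z Z0 hZ hZ0l _ _ rfl _
    set X : Ω → Set (List α) := fun ω => {x | eb x ∈ F i ω ∧
      ∀ y : List (Option α), y.map (fun o => o.getD i) = x → γ / 4 ≤ b y ω} with hX
    obtain ⟨ω0, hω0, ρ, hBρ, hρ⟩ := hM1 Ω p X hp hs (by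
      intro x hx
      have hx0 : (x.map some).map (fun o => o.getD i) = x := map_getD_some x i
      have hav : γ ≤ ∑ ω, p ω * (b (x.map some) ω * ind (eb x ∈ F i ω)) := by
        have h1 : γ ≤ Av D (fun Z => ∑ ω, p ω * (h ((e Z).ev id (x.map some)) ω *
            ind (eb x ∈ F i ω))) := by
          refine le_Av fun Z hZ => ?_
          have h2 := hd ((e Z).ev id (x.map some)) (hb Z hZ _ _ _ (by simpa using hx))
          refine h2.trans (le_of_eq (Finset.sum_congr rfl fun ω _ => ?_))
          simp only [hh]
          rw [mul_assoc (ind _ - τ), ← ind_and]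
          congr 2
          apply ind_congr
          rw [Finset.forall_mem_insert, hr Z hZ, hx0, and_comm]
        rw [Av_sum] at h1
        simpa only [Av_mul_left, Av_mul_right] using h1
      have hpt : ∀ ω, b (x.map some) ω * ind (eb x ∈ F i ω) ≤ 2 * ind (x ∈ X ω) + γ / 4 +
          ∑ y ∈ W, (if x = y.map (fun o => o.getD i) then |b (x.map some) ω - b y ω| else 0) := by
        intro ω
        have hsn : ∀ y ∈ W, 0 ≤
            (if x = y.map (fun o => o.getD i) then |b (x.map some) ω - b y ω| else 0) := by
          intro y _; split_ifs
          · exact abs_nonneg _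
          · exact le_rfl
        have hS0 := Finset.sum_nonneg hsn
        by_cases hG : eb x ∈ F i ω
        · rw [ind_true hG, mul_one]
          by_cases hE : x ∈ X ω
          · rw [ind_true hE]; linarith [hb2 (x.map some) ω]
          · rw [ind_false hE]
            have : ∃ y : List (Option α), y.map (fun o => o.getD i) = x ∧ b y ω < γ / 4 := by
              by_contra hcon
              push Not at hcon
              exact hE ⟨hG, hcon⟩
            obtain ⟨y, hy, hyb⟩ := this
            have hyW : y ∈ W := by
              rw [hmW]
              have := congrArg List.length hy
              simp at this; omega
            have h3 := Finset.single_le_sum hsn hyW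
            rw [if_pos hy.symm] at h3
            have h4 := le_abs_self (b (x.map some) ω - b y ω)
            linarith
        · rw [ind_false hG, mul_zero]
          have := ind_nonneg (x ∈ X ω)
          linarith
      have hsum : ∑ ω, p ω * (b (x.map some) ω * ind (eb x ∈ F i ω)) ≤
          2 * ∑ ω, p ω * ind (x ∈ X ω) + γ / 4 * ∑ ω, p ω + ∑ y ∈ W, ∑ ω, p ω *
          (if x = y.map (fun o => o.getD i) then |b (x.map some) ω - b y ω| else 0) := by
        rw [Finset.sum_comm, Finset.mul_sum, Finset.mul_sum, ← Finset.sum_add_distrib,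
          ← Finset.sum_add_distrib]
        refine Finset.sum_le_sum fun ω _ => ?_
        refine (mul_le_mul_of_nonneg_left (hpt ω) (hp ω)).trans (le_of_eq ?_)
        rw [← Finset.mul_sum]; ring
      have herr : ∑ y ∈ W, ∑ ω, p ω *
          (if x = y.map (fun o => o.getD i) then |b (x.map some) ω - b y ω| else 0) ≤ γ / 4 := by
        calc _ ≤ ∑ y ∈ W, γ / (4 * (W.card + 1)) := by
              refine Finset.sum_le_sum fun y _ => ?_
              split_ifs with hxy
              · exact hc (x.map some) y (by simpa using hx) (hx0.trans hxy)
              · simp; positivity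
          _ = W.card * (γ / (4 * (W.card + 1))) := by simp
          _ ≤ γ / 4 := by
              rw [mul_div_assoc', div_le_div_iff₀ (by positivity) (by norm_num)]
              nlinarith
      have : γ / 4 * ∑ ω, p ω ≤ γ / 4 := by nlinarith
      linarith)
    obtain ⟨Z, -, hZ⟩ := hM (Fin D → Bool) (fun _ => 1 / (Fintype.card Bool : ℝ) ^ D)
      (fun Z => {x | (e (List.ofFn Z)).ev id (ρ.ev some x) ∈ Y ω0})
      (fun j Z => {w | (e (List.ofFn Z)).ev (fun o : Option α => o.getD j) (ρ.ev id w) ∈ F j ω0})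
      (fun _ => by positivity) (by simp) (by
        intro x hx
        have h1 := (hρ (x.map (fun o => o.getD i)) (by simpa using hx.le)).2 (ρ.ev some x)
          (ρ.map_getD x i)
        refine h1.trans (le_of_eq ?_)
        simp only [hbdef]
        rw [Av_eq_sum, Finset.sum_div]
        refine Finset.sum_congr rfl fun Z _ => ?_
        rw [one_div_mul_eq_div]
        congr 1
        simp only [hh]
        congr 1
        apply ind_congr
        refine forall₂_congr fun j _ => ?_
        rw [(e (List.ofFn Z)).nat, ρ.map_getD]
        rfl)
    refine ⟨ω0, hω0, ?_⟩
    refine ((e (List.ofFn Z)).comp (Emb.base some ρ)).hasLine (n := M) ?_ hZ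
    refine (hb _ (by simp)).comp ((hBρ.mono (Nat.le_succ M) le_rfl).base some)

lemma P_of_norm {α : Type} {δ : ℝ} (h : ∃ N : ℕ, ∀ (Ω : Type) [Fintype Ω] (p : Ω → ℝ)
    (X : Ω → Set (List α)), (∀ ω, 0 ≤ p ω) → ∑ ω, p ω = 1 →
    (∀ x : List α, x.length < N → δ ≤ ∑ ω, p ω * ind (x ∈ X ω)) →
    ∃ ω, 0 < p ω ∧ HasLine (X ω) N) : P α δ := by
  obtain ⟨N, hN⟩ := h
  refine ⟨N, fun Ω _ p X hp hs hd => ?_⟩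
  have key : ∀ f : Ω → ℝ, ∑ ω, p ω / (∑ ω, p ω) * f ω = (∑ ω, p ω * f ω) / ∑ ω, p ω := by
    intro f
    rw [Finset.sum_div]
    exact Finset.sum_congr rfl fun ω _ => by ring
  obtain ⟨ω, h1, h2⟩ := hN Ω (fun ω => p ω / ∑ ω, p ω) X (fun ω => div_nonneg (hp ω) hs.le)
    (by rw [← Finset.sum_div, div_self hs.ne']) (by
      intro x hx
      rw [key, le_div_iff₀ hs]
      exact hd x hx)
  refine ⟨ω, ?_, h2⟩
  by_contra hcon
  exact absurd h1 (not_lt.2 (div_nonpos_of_nonpos_of_nonneg (not_lt.1 hcon) hs.le))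

lemma line_up {α : Type} {w : List (Option α)} (h0 : none ∈ w) {S : Set (List (Option α))}
    (h : LineIn w {x | x.map some ∈ S}) (hw : w ∈ S) : HasLine S (w.length + 1) := by
  refine ⟨w.map (Option.map some), List.mem_map.2 ⟨none, h0, rfl⟩, by simp, ?_, ?_⟩
  · obtain ⟨c, u, rfl⟩ := exists_decomp w h0
    have h1 := h.1
    rw [root_append] at h1
    have : (c.map some ++ none :: u).map (Option.map some) =
        (c.map some).map some ++ none :: u.map (Option.map some) := by
      simp [Function.comp_def]
    rw [this, root_append]
    exact h1
  · intro b
    rw [List.map_map]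
    cases b with
    | none =>
      have : w.map ((fun o : Option (Option α) => o.getD none) ∘ Option.map some) = w := by
        conv_rhs => rw [← List.map_id w]
        apply List.map_congr_left
        intro o _
        cases o <;> rfl
      rw [this]; exact hw
    | some a =>
      have h1 := h.2 a
      have : w.map ((fun o : Option (Option α) => o.getD (some a)) ∘ Option.map some) =
          (w.map (fun o => o.getD a)).map some := by
        rw [List.map_map]
        apply List.map_congr_left
        intro o _
        cases o <;> rfl
      rw [this]; exact h1

lemma increment (α : Type) [Fintype α] (hP : ∀ δ : ℝ, 0 < δ → P α δ) (δ0 : ℝ) (hδ0 : 0 < δ0) :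
    ∃ g : ℝ, 0 < g ∧ ∀ δ : ℝ, δ0 ≤ δ → δ ≤ 1 → P (Option α) (δ + g) → P (Option α) δ := by
  obtain ⟨θ, hθ, hA⟩ := lemA α hP δ0 hδ0
  refine ⟨min (δ0 * θ / 2) 1, by positivity, ?_⟩
  set g := min (δ0 * θ / 2) 1 with hg
  have hg0 : 0 < g := by positivity
  have hg1 : g ≤ 1 := min_le_right _ _
  have hg2 : g ≤ δ0 * θ / 2 := min_le_left _ _
  intro δ hδ hδ1 hPβ
  set K := Prop × (α → Prop) with hK
  let _ : Fintype K := Fintype.ofFinite K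
  have hKc : 0 < Fintype.card K := Fintype.card_pos
  obtain ⟨NC, hC⟩ := C_lem α hP (δ + g) (by linarith) (by linarith) hPβ Finset.univ
    (δ0 * θ / 2 / Fintype.card K) (by positivity)
  obtain ⟨NS, hS⟩ := CS' (Option α) K NC
  obtain ⟨N, hN⟩ := hA NS
  apply P_of_norm
  refine ⟨N, fun Ω _ p X hp hs hd => ?_⟩
  by_contra hcon
  push Not at hcon
  obtain ⟨ψ, c, hBψ, hψ⟩ := hN Ω p (fun ω => {x | x.map some ∈ X ω}) hp hs.le (by
    intro x hx
    exact hδ.trans (hd (x.map some) (by simpa using hx)))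
  set w' : List (Option α) → List (Option α) := fun u => ψ.ev some (c.map some ++ none :: u)
    with hw'
  have hw'l : ∀ u, u.length < NS → (w' u).length < N := by
    intro u hu
    exact hBψ _ _ _ (by simp; omega)
  set Q : Ω → Prop := fun ω => (ψ.ev id c).map some ∈ X ω with hQ
  set E : α → Ω → Set (List α) := fun i ω => {y | (ψ.ev id (c ++ i :: y)).map some ∈ X ω} with hE
  set Λ : List (Option α) → Ω → Prop := fun u ω => LineIn (w' u) {x | x.map some ∈ X ω} with hΛ
  have hΛiff : ∀ u ω, Λ u ω ↔ Q ω ∧ ∀ i, u.map (fun o => o.getD i) ∈ E i ω := by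
    intro u ω
    simp only [hΛ, hw', LineIn, hQ, hE]
    rw [ψ.root_ev]
    simp only [ψ.map_getD, Set.mem_ofPred_eq]
    simp [Function.comp_def]
  have hdisj : ∀ u ω, u.length < NS → 0 < p ω → w' u ∈ X ω → ¬ Λ u ω := by
    intro u ω hu hpω h1 h2
    refine hcon ω hpω ?_
    exact (line_up (ψ.none_mem _ (by simp)) h2 h1).mono (hw'l u hu)
  have hmain : ∀ u : List (Option α), u.length < NS →
      δ0 * θ / 2 ≤ ∑ ω, p ω * ((ind (w' u ∈ X ω) - (δ + g)) * ind (¬ Λ u ω)) := by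
    intro u hu
    have h1 : ∀ ω, p ω * ((ind (w' u ∈ X ω) - (δ + g)) * ind (¬ Λ u ω)) =
        p ω * ind (w' u ∈ X ω) - (δ + g) * p ω + (δ + g) * (p ω * ind (Λ u ω)) := by
      intro ω
      by_cases hL : Λ u ω
      · rw [ind_true hL, ind_false (not_not.2 hL)]
        by_cases hX : w' u ∈ X ω
        · have : p ω = 0 := by
            rcases (hp ω).lt_or_eq with h | h
            · exact absurd hL (hdisj u ω hu h hX)
            · exact h.symm
          rw [this]; ring
        · rw [ind_false hX]; ring
      · rw [ind_false hL, ind_true hL]; ring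
    simp only [h1]
    rw [Finset.sum_add_distrib, Finset.sum_sub_distrib, ← Finset.mul_sum, ← Finset.mul_sum, hs]
    have h2 := hd (w' u) (hw'l u hu)
    have h3 := hψ u hu
    have h4 : (δ + g) * θ ≤ (δ + g) * ∑ ω, p ω * ind (Λ u ω) :=
      mul_le_mul_of_nonneg_left h3 (by linarith)
    nlinarith
  set pat : List (Option α) → Ω → K := fun u ω => (Q ω, fun i => u.map (fun o => o.getD i) ∈ E i ω)
    with hpat
  have hcol : ∀ u : List (Option α), ∃ t : K, u.length < NS →
      δ0 * θ / 2 / Fintype.card K ≤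
        ∑ ω, p ω * ((ind (w' u ∈ X ω) - (δ + g)) * ind (pat u ω = t)) := by
    intro u
    by_cases hu : u.length < NS
    swap
    · exact ⟨(True, fun _ => True), fun h => absurd h hu⟩
    have h1 := hmain u hu
    have h2 : ∑ ω, p ω * ((ind (w' u ∈ X ω) - (δ + g)) * ind (¬ Λ u ω)) =
        ∑ t : K, ∑ ω, p ω * ((ind (w' u ∈ X ω) - (δ + g)) * ind (¬ Λ u ω)) *
          ind (pat u ω = t) := by
      classical
      rw [Finset.sum_comm]
      refine Finset.sum_congr rfl fun ω _ => ?_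
      rw [← Finset.mul_sum]
      have : ∑ t : K, ind (pat u ω = t) = 1 := by
        rw [Finset.sum_eq_single (pat u ω)]
        · exact ind_true rfl
        · intro t _ ht; exact ind_false (Ne.symm ht)
        · intro h; exact absurd (Finset.mem_univ _) h
      rw [this, mul_one]
    rw [h2] at h1
    obtain ⟨t, _, ht⟩ := Finset.exists_le_of_sum_le (s := (Finset.univ : Finset K))
      (f := fun _ => δ0 * θ / 2 / Fintype.card K)
      (g := fun t => ∑ ω, p ω * ((ind (w' u ∈ X ω) - (δ + g)) * ind (¬ Λ u ω)) *
          ind (pat u ω = t)) Finset.univ_nonempty (by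
        simp only [Finset.sum_const, Finset.card_univ, nsmul_eq_mul]
        rw [mul_div_cancel₀ _ (by positivity)]
        exact h1)
    refine ⟨t, fun _ => ht.trans (le_of_eq ?_)⟩
    have htne : ¬ (t.1 ∧ ∀ i, t.2 i) := by
      intro htt
      have h3 : ∑ ω, p ω * ((ind (w' u ∈ X ω) - (δ + g)) * ind (¬ Λ u ω)) *
          ind (pat u ω = t) = 0 := by
        refine Finset.sum_eq_zero fun ω _ => ?_
        by_cases hpt : pat u ω = t
        · have : Λ u ω := by
            rw [hΛiff]
            rw [← hpt] at htt
            exact htt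
          rw [ind_false (not_not.2 this)]; ring
        · rw [ind_false hpt]; ring
      have h4 : (0:ℝ) < δ0 * θ / 2 / Fintype.card K := by positivity
      have h5 := ht.trans_eq h3
      exact absurd h4 (not_lt.2 h5)
    refine Finset.sum_congr rfl fun ω _ => ?_
    by_cases hpt : pat u ω = t
    · have : ¬ Λ u ω := by
        rw [hΛiff]
        rw [← hpt] at htne
        exact htne
      rw [ind_true this, ind_true hpt]; ring
    · rw [ind_false hpt]; ring
  choose χ hχ using hcol
  obtain ⟨t, φ, hBφ, hφ⟩ := hS χ
  obtain ⟨ω, hω1, hω2⟩ := hC Ω (fun ω => p ω * ind (Q ω = t.1))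
    (fun ω => {x | w' (φ.ev id x) ∈ X ω})
    (fun i ω => {y | (φ.ev (fun o : Option α => o.getD i) y ∈ E i ω) = t.2 i})
    (fun ω => mul_nonneg (hp ω) (ind_nonneg _))
    (by
      refine le_trans (Finset.sum_le_sum fun ω _ => ?_) hs.le
      exact mul_le_of_le_one_right (hp ω) (ind_le_one _))
    (by
      intro x hx
      have h1 := hχ (φ.ev id x) (hBφ _ _ _ hx)
      rw [hφ x hx] at h1
      refine h1.trans (le_of_eq (Finset.sum_congr rfl fun ω _ => ?_))
      have h2 : ind (pat (φ.ev id x) ω = t) = ind (Q ω = t.1) * ind (∀ i ∈ Finset.univ,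
          x.map (fun o => o.getD i) ∈
            {y | (φ.ev (fun o : Option α => o.getD i) y ∈ E i ω) = t.2 i}) := by
        rw [← ind_and]
        apply ind_congr
        simp only [hpat, Finset.mem_univ, true_imp_iff,
          Set.mem_ofPred_eq, φ.nat, Function.comp_id]
        constructor
        · intro h; rw [← h]; exact ⟨rfl, fun _ => rfl⟩
        · rintro ⟨h1, h2⟩; exact Prod.ext h1 (funext h2)
      rw [h2]
      simp only [Set.mem_ofPred_eq]
      ring)
  have hpω : 0 < p ω := by
    rcases (hp ω).lt_or_eq with h | h
    · exact h
    · rw [← h] at hω1; simp at hω1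
  refine hcon ω hpω ?_
  have h1 : HasLine {u | w' u ∈ X ω} NS := φ.hasLine hBφ hω2
  refine ((Emb.base some ψ).comp (Emb.pre (c.map some ++ [none]))).hasLine (n := NS) ?_ ?_
  · refine (hBψ.base some).comp ((Bd.pre _ _).mono le_rfl ?_)
    simp
  · convert h1 using 2
    simp [Emb.comp_ev, Emb.pre_ev, Emb.base_ev, hw']

theorem P_all (α : Type) [Finite α] : ∀ δ : ℝ, 0 < δ → P α δ := by
  induction α using Finite.induction_empty_option with
  | of_equiv e h => intro δ hδ; exact P_equiv e (h δ hδ)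
  | h_empty => intro δ hδ; exact P_empty _ δ hδ
  | h_option h =>
    rename_i α _
    intro δ0 hδ0
    obtain ⟨g, hg, hinc⟩ := increment α h δ0 hδ0
    have vac : ∀ δ : ℝ, 1 < δ → P (Option α) δ := by
      intro δ hδ
      refine ⟨1, fun Ω _ p X hp hs hd => ?_⟩
      exfalso
      have h1 := hd [] (by simp)
      have h2 : ∑ ω, p ω * ind ([] ∈ X ω) ≤ ∑ ω, p ω :=
        Finset.sum_le_sum fun ω _ => mul_le_of_le_one_right (hp ω) (ind_le_one _)
      nlinarith
    have key : ∀ n : ℕ, ∀ δ : ℝ, δ0 ≤ δ → 1 < δ + n * g → P (Option α) δ := by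
      intro n
      induction n with
      | zero => intro δ _ h1; exact vac δ (by simpa using h1)
      | succ n ih =>
        intro δ h0 h1
        rcases le_or_gt δ 1 with h2 | h2
        · refine hinc δ h0 h2 (ih (δ + g) (by linarith) ?_)
          push_cast at h1; linarith
        · exact vac δ h2
    obtain ⟨n, hn⟩ := exists_nat_gt (1 / g)
    refine key n δ0 le_rfl ?_
    rw [div_lt_iff₀ hg] at hn
    linarith

end CSD


namespace CSD

section Final

variable {Γ : Type} [Fintype Γ]

noncomputable def corr (A : Set (List Γ)) (t l : ℕ) : ℝ :=
  Av l (fun w => ind (w.take t ∈ A) * ind (w ∈ A))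

lemma Av_sq_le [Nonempty Γ] (n : ℕ) (S : List Γ → ℝ) : (Av n S) ^ 2 ≤ Av n (fun z => S z ^ 2) := by
  have h : 0 ≤ Av n (fun z => (S z - Av n S) ^ 2) := Av_nonneg fun z _ => sq_nonneg _
  have h1 : ∀ z, (S z - Av n S) ^ 2 = S z ^ 2 + (-2 * Av n S) * S z + (Av n S) ^ 2 := by
    intro z; ring
  simp only [h1] at h
  rw [Av_add, Av_add, Av_mul_left, Av_const] at h
  linarith

lemma Av_take' [Nonempty Γ] {n l : ℕ} (h : n ≤ l) (F : List Γ → ℝ) :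
    Av l (fun z => F (z.take n)) = Av n F := by
  obtain ⟨m, rfl⟩ := Nat.exists_eq_add_of_le h
  exact Av_take n m F

lemma corr_take [Nonempty Γ] (A : Set (List Γ)) {s t n : ℕ} (hst : s ≤ t) (htn : t ≤ n) :
    Av n (fun w => ind (w.take s ∈ A) * ind (w.take t ∈ A)) = corr A s t := by
  unfold corr
  rw [← Av_take' htn]
  refine Av_congr fun w _ => ?_
  rw [List.take_take, min_eq_left hst]

lemma H_infinite [Nonempty Γ] (A : Set (List Γ)) (L : Set ℕ) (δ : ℝ) (hδ : 0 < δ)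
    (hA : ∀ l ∈ L, δ ≤ Av l (fun w => ind (w ∈ A))) (U : Ultrafilter ℕ)
    (hU : (U : Filter ℕ) ≤ Filter.cofinite) (hL : L ∈ U) :
    {t ∈ L | ∀ᶠ l in (U : Filter ℕ), δ ^ 2 / 2 ≤ corr A t l}.Infinite := by
  intro hfin
  set H := {t ∈ L | ∀ᶠ l in (U : Filter ℕ), δ ^ 2 / 2 ≤ corr A t l} with hH
  have hHc : Hᶜ ∈ (U : Filter ℕ) := hU hfin.compl_mem_cofinite
  obtain ⟨f, hf1, hf2⟩ := exists_seq_of_forall_finset_exists (fun t => t ∈ L ∧ t ∉ H)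
    (fun s t => s < t ∧ corr A s t < δ ^ 2 / 2) (by
      intro s hs
      have h1 : ∀ᶠ l in (U : Filter ℕ), ∀ x ∈ s, corr A x l < δ ^ 2 / 2 := by
        rw [Filter.eventually_all_finset]
        intro x hx
        have h2 : ¬ ∀ᶠ l in (U : Filter ℕ), δ ^ 2 / 2 ≤ corr A x l :=
          fun h => (hs x hx).2 ⟨(hs x hx).1, h⟩
        rw [← Ultrafilter.eventually_not] at h2
        filter_upwards [h2] with l hl
        exact not_le.1 hl
      have h3 : ∀ᶠ l in (U : Filter ℕ), ∀ x ∈ s, x < l := by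
        rw [Filter.eventually_all_finset]
        intro x hx
        refine hU ?_
        have : ({l | l ≤ x} : Set ℕ).Finite := Set.finite_le_nat x
        refine Filter.mem_of_superset this.compl_mem_cofinite ?_
        intro l hl
        simpa using hl
      have h4 : ∀ᶠ l in (U : Filter ℕ), l ∈ L := hL
      have h5 : ∀ᶠ l in (U : Filter ℕ), l ∈ Hᶜ := hHc
      obtain ⟨l, hl⟩ := (h1.and (h3.and (h4.and h5))).exists
      exact ⟨l, ⟨hl.2.2.1, hl.2.2.2⟩, fun x hx => ⟨hl.2.1 x hx, hl.1 x hx⟩⟩)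
  obtain ⟨R, hR⟩ := exists_nat_gt (2 / δ ^ 2)
  have hR0 : (0:ℝ) < R := lt_of_le_of_lt (by positivity) hR
  have hmono : ∀ i j, i ≤ j → f i ≤ f j := by
    intro i j hij
    rcases hij.lt_or_eq with h | h
    · exact (hf2 i j h).1.le
    · rw [h]
  set n := f R with hn
  have hav : R * δ ≤ Av n (fun w => ∑ i ∈ Finset.range R, ind (w.take (f i) ∈ A)) := by
    rw [Av_sum]
    calc (R:ℝ) * δ = ∑ i ∈ Finset.range R, δ := by simp
      _ ≤ _ := by
        refine Finset.sum_le_sum fun i hi => ?_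
        rw [Av_take' (hmono i R (Finset.mem_range.1 hi).le) (fun z => ind (z ∈ A))]
        exact hA _ (hf1 i).1
  have hsq : Av n (fun w => (∑ i ∈ Finset.range R, ind (w.take (f i) ∈ A)) ^ 2) ≤
      R + R * (R * (δ ^ 2 / 2)) := by
    have h1 : ∀ w : List Γ, (∑ i ∈ Finset.range R, ind (w.take (f i) ∈ A)) ^ 2 =
        ∑ i ∈ Finset.range R, ∑ j ∈ Finset.range R,
          ind (w.take (f i) ∈ A) * ind (w.take (f j) ∈ A) := by
      intro w; rw [sq, Finset.sum_mul_sum]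
    simp only [h1]
    rw [Av_sum]
    simp only [Av_sum]
    calc _ ≤ ∑ i ∈ Finset.range R, ∑ j ∈ Finset.range R,
          ((if i = j then (1:ℝ) else 0) + δ ^ 2 / 2) := by
          refine Finset.sum_le_sum fun i hi => Finset.sum_le_sum fun j hj => ?_
          have hi' := Finset.mem_range.1 hi
          have hj' := Finset.mem_range.1 hj
          rcases lt_trichotomy i j with h | h | h
          · rw [if_neg h.ne, corr_take A (hmono i j h.le) (hmono j R hj'.le), zero_add]
            exact (hf2 i j h).2.le
          · rw [if_pos h]
            have : Av n (fun w => ind (w.take (f i) ∈ A) * ind (w.take (f j) ∈ A)) ≤ 1 := by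
              refine Av_le fun w _ => ?_
              rw [← ind_and]; exact ind_le_one _
            have : 0 ≤ δ ^ 2 / 2 := by positivity
            linarith
          · rw [if_neg h.ne']
            have h2 : ∀ w : List Γ, ind (w.take (f i) ∈ A) * ind (w.take (f j) ∈ A) =
              ind (w.take (f j) ∈ A) * ind (w.take (f i) ∈ A) := fun w => mul_comm _ _
            simp only [h2]
            rw [corr_take A (hmono j i h.le) (hmono i R hi'.le), zero_add]
            exact (hf2 j i h).2.le
      _ = R + R * (R * (δ ^ 2 / 2)) := by
          simp only [Finset.sum_add_distrib, Finset.sum_ite_eq, Finset.sum_const,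
            Finset.card_range, nsmul_eq_mul]
          rw [Finset.sum_congr rfl (g := fun _ => (1:ℝ))]
          · simp
          · intro i hi; rw [if_pos hi]
  have h1 := (Av_sq_le n (fun w => ∑ i ∈ Finset.range R, ind (w.take (f i) ∈ A))).trans hsq
  have h2 : (R * δ) ^ 2 ≤ (Av n (fun w => ∑ i ∈ Finset.range R, ind (w.take (f i) ∈ A))) ^ 2 :=
    pow_le_pow_left₀ (by positivity) hav 2
  rw [div_lt_iff₀ (by positivity)] at hR
  nlinarith

/-! realizations -/

def sb {γ : Type} (p : List (Option Γ)) (ι : Γ → γ) (a : γ) : List γ := p.map (fun o => o.elim a ι)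

def real {γ : Type} (p : List (Option Γ)) (ι : Γ → γ) : List ℕ → List Γ → List γ → List γ
  | [], _, _ => []
  | d :: _, Z, [] => (Z.take d).map ι
  | d :: ds, Z, a :: x => (Z.take d).map ι ++ (sb p ι a ++ real p ι ds (Z.drop d) x)

noncomputable def GG (p : List (Option Γ)) (F : List Γ → ℝ) :
    List ℕ → List Γ → List Γ → ℝ
  | [], _, c => F c
  | d :: _, [], c => Av d (fun y => F (c ++ y))
  | d :: ds, a :: x, c => Av d (fun y => GG p F ds x (c ++ y ++ sb p id a))

def Good (p : List (Option Γ)) (H : Set ℕ) (F : List Γ → ℝ) (η ε : ℝ) : ℕ → List ℕ → Prop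
  | _, [] => True
  | n0, d :: ds => n0 + d ∈ H ∧ η ≤ Av (n0 + d) F ∧
      (∀ (x : List Γ) (a : Γ), x.length < ds.length →
        Av (n0 + d + p.length) (GG p F ds x) - ε ≤
          Av (n0 + d) (fun c => GG p F ds x (c ++ sb p id a))) ∧
      Good p H F η ε (n0 + d + p.length) ds

lemma real_nat {γ γ' : Type} (p : List (Option Γ)) (ι : Γ → γ) (f : γ → γ') (ds : List ℕ) :
    ∀ (Z : List Γ) (x : List γ),
      (real p ι ds Z x).map f = real p (f ∘ ι) ds Z (x.map f) := by
  induction ds with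
  | nil => intro Z x; rfl
  | cons d ds ih =>
    intro Z x
    cases x with
    | nil => simp [real]
    | cons a x =>
      simp only [real, List.map_append, List.map_cons, ih, List.map_map]
      congr 2
      simp only [sb, List.map_map]
      apply List.map_congr_left
      intro o _
      cases o <;> rfl

lemma real_left {γ : Type} (p : List (Option Γ)) (ι : Γ → γ) (ds : List ℕ) :
    ∀ (Z : List Γ) (x : List γ) (a : γ) (y : List γ), x.length < ds.length →
      ∃ z, real p ι ds Z (x ++ a :: y) = real p ι ds Z x ++ (sb p ι a ++ z) := by
  induction ds with
  | nil => intro Z x a y h; simp at h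
  | cons d ds ih =>
    intro Z x a y h
    cases x with
    | nil => exact ⟨_, rfl⟩
    | cons b x =>
      obtain ⟨z, hz⟩ := ih (Z.drop d) x a y (by simpa using h)
      exact ⟨z, by simp [real, hz]⟩

lemma real_length {γ : Type} (p : List (Option Γ)) (H : Set ℕ) (F : List Γ → ℝ) (η ε : ℝ)
    (ι : Γ → γ) (ds : List ℕ) : ∀ (n0 : ℕ) (Z : List Γ) (x : List γ), Good p H F η ε n0 ds →
      x.length < ds.length → ds.sum ≤ Z.length →
      n0 + (real p ι ds Z x).length ∈ H ∧
      (real p ι ds Z x).length ≤ ds.sum + ds.length * p.length := by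
  induction ds with
  | nil => intro n0 Z x _ h; simp at h
  | cons d ds ih =>
    intro n0 Z x hG hx hZ
    rw [List.sum_cons] at hZ
    cases x with
    | nil =>
      have : (real p ι (d :: ds) Z []).length = d := by simp [real]; omega
      rw [this]
      refine ⟨hG.1, ?_⟩
      rw [List.sum_cons, add_assoc]; exact Nat.le_add_right _ _
    | cons a x =>
      obtain ⟨h1, h2⟩ := ih (n0 + d + p.length) (Z.drop d) x hG.2.2.2 (by simpa using hx)
        (by simp; omega)
      have : (real p ι (d :: ds) Z (a :: x)).length =
          d + p.length + (real p ι ds (Z.drop d) x).length := by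
        simp [real, sb]; omega
      rw [this]
      constructor
      · have h3 : n0 + (d + p.length + (real p ι ds (Z.drop d) x).length) =
          n0 + d + p.length + (real p ι ds (Z.drop d) x).length := by omega
        rw [h3]; exact h1
      · rw [List.sum_cons, List.length_cons, Nat.succ_mul]; omega

lemma Av_real [Nonempty Γ] (p : List (Option Γ)) (F : List Γ → ℝ) (ds : List ℕ) :
    ∀ (D : ℕ) (x c : List Γ), x.length < ds.length → ds.sum ≤ D →
      Av D (fun Z => F (c ++ real p id ds Z x)) = GG p F ds x c := by
  induction ds with
  | nil => intro D x c h; simp at h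
  | cons d ds ih =>
    intro D x c hx hD
    rw [List.sum_cons] at hD
    obtain ⟨D', rfl⟩ := Nat.exists_eq_add_of_le (show d ≤ D by omega)
    rw [Av_append]
    cases x with
    | nil =>
      simp only [GG]
      refine Av_congr fun y hy => ?_
      rw [← Av_const (Γ := Γ) D' (F (c ++ y))]
      refine Av_congr fun Z' _ => ?_
      simp only [real, List.map_id]
      rw [← hy, List.take_left]
    | cons a x =>
      simp only [GG]
      refine Av_congr fun y hy => ?_
      rw [← ih D' x (c ++ y ++ sb p id a) (by simpa using hx) (by omega)]
      refine Av_congr fun Z' _ => ?_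
      simp only [real, List.map_id]
      rw [← hy, List.take_left, List.drop_left]
      simp

lemma GG_bound [Nonempty Γ] (p : List (Option Γ)) (F : List Γ → ℝ) (h0 : ∀ c, 0 ≤ F c)
    (h1 : ∀ c, F c ≤ 1) (ds : List ℕ) : ∀ (x c : List Γ),
      0 ≤ GG p F ds x c ∧ GG p F ds x c ≤ 1 := by
  induction ds with
  | nil => intro x c; exact ⟨h0 c, h1 c⟩
  | cons d ds ih =>
    intro x c
    cases x with
    | nil => exact ⟨Av_nonneg fun y _ => h0 _, Av_le fun y _ => h1 _⟩
    | cons a x => exact ⟨Av_nonneg fun y _ => (ih _ _).1, Av_le fun y _ => (ih _ _).2⟩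

lemma Good_Av (p : List (Option Γ)) (H : Set ℕ) (F : List Γ → ℝ) (η ε : ℝ) (ds : List ℕ) :
    ∀ (n0 : ℕ) (x : List Γ), Good p H F η ε n0 ds → x.length < ds.length →
      η - x.length * ε ≤ Av n0 (GG p F ds x) := by
  induction ds with
  | nil => intro n0 x _ h; simp at h
  | cons d ds ih =>
    intro n0 x hG hx
    cases x with
    | nil =>
      have : Av n0 (GG p F (d :: ds) []) = Av (n0 + d) F := by
        rw [Av_append]; rfl
      rw [this]
      simpa using hG.2.1
    | cons a x =>
      have hx' : x.length < ds.length := by simpa using hx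
      have : Av n0 (GG p F (d :: ds) (a :: x)) =
          Av (n0 + d) (fun c => GG p F ds x (c ++ sb p id a)) := by
        rw [Av_append]; rfl
      rw [this]
      have h1 := hG.2.2.1 x a hx'
      have h2 := ih _ x hG.2.2.2 hx'
      push_cast [List.length_cons]
      linarith

def rebase (g : ℕ) : List ℕ → List ℕ
  | [] => []
  | d :: ds => (d + g) :: ds

lemma rebase_length (g : ℕ) (ds : List ℕ) : (rebase g ds).length = ds.length := by
  cases ds <;> rfl

lemma rebase_sum (g : ℕ) (ds : List ℕ) : (rebase g ds).sum ≤ ds.sum + g := by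
  cases ds <;> simp [rebase]; omega

lemma GG_rebase (p : List (Option Γ)) (F : List Γ → ℝ) (g : ℕ) (ds : List ℕ) (x c : List Γ)
    (hx : x.length < ds.length) :
    GG p F (rebase g ds) x c = Av g (fun z => GG p F ds x (c ++ z)) := by
  cases ds with
  | nil => simp at hx
  | cons d ds =>
    simp only [rebase]
    cases x with
    | nil => simp only [GG]; rw [add_comm d g, Av_append]; simp
    | cons a x => simp only [GG]; rw [add_comm d g, Av_append]; simp

lemma Good_rebase (p : List (Option Γ)) (H : Set ℕ) (F : List Γ → ℝ) (η ε : ℝ) (g n0 : ℕ)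
    (ds : List ℕ) (h : Good p H F η ε (n0 + g) ds) : Good p H F η ε n0 (rebase g ds) := by
  cases ds with
  | nil => trivial
  | cons d ds =>
    have h1 : n0 + g + d = n0 + (d + g) := by omega
    simp only [Good, rebase] at h ⊢
    rw [h1] at h
    exact h

lemma Av_single (r : ℕ) (f : List Γ → ℝ) (hf : ∀ z, 0 ≤ f z) (z0 : List Γ)
    (h0 : z0.length = r) : f z0 ≤ (Fintype.card Γ : ℝ) ^ r * Av r f := by
  subst h0
  rw [Av_eq_sum]
  by_cases hc : (Fintype.card Γ : ℝ) ^ z0.length = 0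
  · cases z0 with
    | nil => simp at hc
    | cons a z =>
      have : Nonempty Γ := ⟨a⟩
      have h1 : (Fintype.card Γ : ℝ) ≠ 0 := by simp
      exact absurd hc (pow_ne_zero _ h1)
  rw [mul_div_cancel₀ _ hc]
  have := Finset.single_le_sum (s := Finset.univ)
    (f := fun v : Fin z0.length → Γ => f (List.ofFn v)) (fun v _ => hf _)
    (Finset.mem_univ (fun j => z0.get j))
  simpa only [List.ofFn_get] using this

lemma Good_exists [Nonempty Γ] (p : List (Option Γ)) (H : Set ℕ) (hH : H.Infinite) (η ε : ℝ)
    (hε : 0 < ε) (n : ℕ) : ∀ n0 : ℕ, ∃ B : ℕ, ∀ F : List Γ → ℝ, (∀ c, 0 ≤ F c) → (∀ c, F c ≤ 1) →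
      (∀ t ∈ H, t < B → η ≤ Av t F) →
      ∃ ds : List ℕ, ds.length = n ∧ n0 + ds.sum + n * p.length < B ∧ Good p H F η ε n0 ds := by
  induction n with
  | zero =>
    intro n0
    exact ⟨n0 + 1, fun F _ _ _ => ⟨[], rfl, by simp, trivial⟩⟩
  | succ n ih =>
    intro n0
    set W := (finite_lt Γ n).toFinset with hW
    have hmW : ∀ x, x ∈ W ↔ x.length < n := by intro w; simp [hW]
    set κ : ℝ := (Fintype.card Γ : ℝ) ^ p.length with hκ
    have hκ0 : 0 < κ := by
      have : 0 < Fintype.card Γ := Fintype.card_pos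
      positivity
    obtain ⟨T, hT⟩ := exists_nat_gt (κ ^ 2 * W.card / ε ^ 2)
    have hT0 : (0:ℝ) < T := lt_of_le_of_lt (by positivity) hT
    have hT0' : 0 < T := by exact_mod_cast hT0
    obtain ⟨s, hs1, hs2⟩ := exists_seq_of_forall_finset_exists (fun t => t ∈ H ∧ n0 ≤ t)
      (fun a b => a + p.length ≤ b) (by
        intro S _
        obtain ⟨b, hb, hb'⟩ := hH.exists_gt (n0 + p.length + S.sup id)
        refine ⟨b, ⟨hb, by omega⟩, fun a ha => ?_⟩
        have : a ≤ S.sup id := Finset.le_sup (f := id) ha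
        omega)
    obtain ⟨B, hB⟩ := ih (s T)
    refine ⟨B, fun F h0 h1 hF => ?_⟩
    obtain ⟨ds, hl, hsum, hG⟩ := hB F h0 h1 hF
    set Hx : List Γ → List Γ → ℝ := fun x c =>
      Av (s T - c.length) (fun z => GG p F ds x (c ++ z)) with hHx
    have hHarm : ∀ x, Harm (s T) (Hx x) := fun x => Harm_ext _ _
    have hHb : ∀ x c, |Hx x c| ≤ 1 := by
      intro x c
      rw [abs_le]
      constructor
      · have : 0 ≤ Hx x c := Av_nonneg fun z _ => (GG_bound p F h0 h1 ds _ _).1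
        linarith
      · exact Av_le fun z _ => (GG_bound p F h0 h1 ds _ _).2
    have hsmono : ∀ i j, i ≤ j → s i ≤ s j := by
      intro i j hij
      rcases hij.lt_or_eq with h | h
      · have := hs2 i j h; omega
      · rw [h]
    obtain ⟨i, hi, hiE⟩ := pigeon_diff (fun i => ∑ x ∈ W, En (Hx x) (s i)) T hT0' W.card
      (Finset.sum_nonneg fun x _ => En_nonneg _ _)
      (by
        calc ∑ x ∈ W, En (Hx x) (s T) ≤ ∑ x ∈ W, (1:ℝ) := by
              refine Finset.sum_le_sum fun x _ => ?_
              have := En_le (s T) (hHb x)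
              linarith
          _ = W.card := by simp)
    have hle : s i + p.length ≤ s T := hs2 i T hi
    have hle' : s i + p.length ≤ s (i + 1) := hs2 i (i + 1) (Nat.lt_succ_self i)
    have hE : ∀ x ∈ W, En (Hx x) (s i + p.length) - En (Hx x) (s i) ≤ W.card / T := by
      intro x hx
      have e1 : ∑ x ∈ W, (En (Hx x) (s (i + 1)) - En (Hx x) (s i)) ≤ W.card / T := by
        rw [Finset.sum_sub_distrib]; exact hiE
      have e2 := Finset.single_le_sum (f := fun x => En (Hx x) (s (i + 1)) - En (Hx x) (s i))
        (s := W) (fun x _ => sub_nonneg.2 (En_mono (hHarm x)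
          (hsmono i (i + 1) (Nat.le_succ i)) (hsmono (i + 1) T hi))) hx
      have e3 := En_mono (hHarm x) hle' (hsmono (i + 1) T hi)
      have e4 := e2.trans e1
      linarith
    set g := s T - s i - p.length with hg
    have hgs : s i + p.length + g = s T := by omega
    have hn0 : n0 + (s i - n0) = s i := by have := (hs1 i).2; omega
    refine ⟨(s i - n0) :: rebase g ds, by simp [rebase_length, hl], ?_, ?_⟩
    · rcases Nat.eq_zero_or_pos n with hn | hn
      · subst hn
        have : ds = [] := List.length_eq_zero_iff.1 hl
        subst this
        simp only [rebase, List.sum_cons, List.sum_nil]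
        simp at hsum
        omega
      · have := rebase_sum g ds
        rw [List.sum_cons, Nat.succ_mul]
        omega
    · refine ⟨by rw [hn0]; exact (hs1 i).1, ?_, ?_, ?_⟩
      · rw [hn0]
        exact hF _ (hs1 i).1 (by omega)
      · intro x a hx
        rw [rebase_length] at hx
        rw [hn0]
        have hGH : ∀ c : List Γ, c.length = s i + p.length →
            GG p F (rebase g ds) x c = Hx x c := by
          intro c hc
          rw [GG_rebase p F g ds x c hx]
          simp only [hHx]
          rw [hc]
          congr 1
          omega
        have a1 : Av (s i + p.length) (GG p F (rebase g ds) x) = Av (s i) (Hx x) := by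
          rw [Av_congr hGH, Av_append]
          refine Av_congr fun c hc => ?_
          exact (hHarm x c p.length (by omega)).symm
        have a2 : Av (s i) (fun c => GG p F (rebase g ds) x (c ++ sb p id a)) =
            Av (s i) (fun c => Hx x (c ++ sb p id a)) := by
          refine Av_congr fun c hc => hGH _ ?_
          simp [sb, hc]
        rw [a1, a2]
        have a3 : |Av (s i) (fun c => Hx x (c ++ sb p id a) - Hx x c)| ≤ ε := by
          have b1 := Av_abs_le (hHarm x) hle (show (0:ℝ) < ε / κ by positivity)
          have b2 := hE x ((hmW x).2 (by omega))
          calc _ ≤ Av (s i) (fun c => |Hx x (c ++ sb p id a) - Hx x c|) := Av_abs _ _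
            _ ≤ Av (s i) (fun c => κ * Av p.length (fun z => |Hx x (c ++ z) - Hx x c|)) := by
                refine Av_mono fun c _ => ?_
                exact Av_single p.length (fun z => |Hx x (c ++ z) - Hx x c|)
                  (fun z => abs_nonneg _) (sb p id a) (by simp [sb])
            _ = κ * Av (s i) (fun c => Av p.length (fun z => |Hx x (c ++ z) - Hx x c|)) :=
                Av_mul_left _ _ _
            _ ≤ κ * ((ε / κ) / 2 + (1 / (2 * (ε / κ))) * (W.card / T)) := by
                refine mul_le_mul_of_nonneg_left (b1.trans ?_) hκ0.le
                gcongr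
            _ = ε / 2 + (κ ^ 2 * W.card) / (2 * ε * T) := by field_simp
            _ ≤ ε := by
                have : (κ ^ 2 * W.card) / (2 * ε * T) ≤ ε / 2 := by
                  rw [div_lt_iff₀ (by positivity)] at hT
                  rw [div_le_div_iff₀ (by positivity) (by norm_num)]
                  nlinarith
                linarith
        rw [Av_sub] at a3
        have := (abs_le.1 a3).1
        linarith
      · rw [hn0]
        apply Good_rebase
        rw [hgs]; exact hG

end Final

end CSD


namespace CSD

section Last

variable {Γ : Type} [Fintype Γ]

/-- The pointwise weight used for level `l`. -/
noncomputable def FF (A : Set (List Γ)) (l : ℕ) (c : List Γ) : ℝ :=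
  ind (c ∈ A) * Av (l - c.length) (fun s => ind (c ++ s ∈ A))

lemma FF_nonneg (A : Set (List Γ)) (l : ℕ) (c : List Γ) : 0 ≤ FF A l c :=
  mul_nonneg (ind_nonneg _) (Av_nonneg fun _ _ => ind_nonneg _)

lemma FF_le_one [Nonempty Γ] (A : Set (List Γ)) (l : ℕ) (c : List Γ) : FF A l c ≤ 1 :=
  mul_le_one₀ (ind_le_one _) (Av_nonneg fun _ _ => ind_nonneg _) (Av_le fun _ _ => ind_le_one _)

lemma Av_FF (A : Set (List Γ)) {t l : ℕ} (h : t ≤ l) : Av t (FF A l) = corr A t l := by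
  obtain ⟨m, rfl⟩ := Nat.exists_eq_add_of_le h
  unfold corr
  rw [Av_append]
  refine Av_congr fun c hc => ?_
  unfold FF
  rw [hc, Nat.add_sub_cancel_left, ← Av_mul_left]
  refine Av_congr fun s _ => ?_
  rw [← hc, List.take_left]

lemma core [Nonempty Γ] {n : ℕ} {θ η ε : ℝ} (hθ : 0 < θ)
    (hPL : ∀ (Ω : Type) [Fintype Ω] (p : Ω → ℝ) (X : Ω → Set (List Γ)),
      (∀ ω, 0 ≤ p ω) → ∑ ω, p ω ≤ 1 →
      (∀ x : List Γ, x.length < n → η / 2 ≤ ∑ ω, p ω * ind (x ∈ X ω)) →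
      ∃ w : List (Option Γ), none ∈ w ∧ w.length < n ∧
        θ ≤ ∑ ω, p ω * ind (LineIn w (X ω)))
    (hε0 : 0 ≤ ε) (hε : n * ε ≤ η / 2) (A : Set (List Γ)) (p : List (Option Γ)) (H : Set ℕ)
    (l B : ℕ) (hl : B ≤ l) (ds : List ℕ) (hds : ds.length = n)
    (hB : ds.sum + n * p.length < B) (hG : Good p H (FF A l) η ε 0 ds) :
    ∃ (c : List Γ) (w : List (Option Γ)), p <+: w ∧ c ∈ A ∧
      (∀ a, c ++ w.map (fun o => o.getD a) ∈ A) ∧ c.length ∈ H ∧ c.length + w.length ∈ H ∧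
      c.length + w.length < B ∧
      θ ≤ Av (l - (c.length + w.length))
        (fun s => ind (∀ a, c ++ w.map (fun o => o.getD a) ++ s ∈ A)) := by
  set D := ds.sum with hD
  have hlen : ∀ {γ : Type} (ι : Γ → γ) (Z : List Γ) (x : List γ), Z.length = D → x.length < n →
      (real p ι ds Z x).length ∈ H ∧ (real p ι ds Z x).length < B := by
    intro γ ι Z x hZ hx
    have := real_length p H (FF A l) η ε ι ds 0 Z x hG (by omega) (by omega)
    rw [hds, zero_add] at this
    exact ⟨this.1, by omega⟩
  -- the process
  let X : List Γ → List Γ → Set (List Γ) := fun Z s =>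
    {x | real p id ds Z x ∈ A ∧
      real p id ds Z x ++ s.take (l - (real p id ds Z x).length) ∈ A}
  have hsum : ∀ f : List Γ → List Γ → ℝ,
      ∑ ω : Fin (D + l) → Γ, (((Fintype.card Γ : ℝ) ^ (D + l))⁻¹ *
        f ((List.ofFn ω).take D) ((List.ofFn ω).drop D)) =
      Av D (fun Z => Av l (fun s => f Z s)) := by
    intro f
    have h1 := Av_eq_sum (Γ := Γ) (D + l) (fun y => f (y.take D) (y.drop D))
    rw [← Finset.mul_sum, ← div_eq_inv_mul, ← h1, Av_append]
    refine Av_congr fun Z hZ => Av_congr fun s _ => ?_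
    rw [← hZ, List.take_left, List.drop_left]
  obtain ⟨w0, hw0, hw0n, hw0θ⟩ := hPL (Fin (D + l) → Γ)
    (fun _ => ((Fintype.card Γ : ℝ) ^ (D + l))⁻¹)
    (fun ω => X ((List.ofFn ω).take D) ((List.ofFn ω).drop D))
    (fun _ => by positivity)
    (by
      have h := hsum (fun _ _ => 1)
      simp only [mul_one, Av_const] at h
      exact h.le)
    (by
      intro x hx
      rw [hsum (fun Z s => ind (x ∈ X Z s))]
      have h1 := Good_Av p H (FF A l) η ε ds 0 x hG (by omega)
      rw [Av_zero, ← Av_real p (FF A l) ds D x [] (by omega) le_rfl] at h1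
      have h2 : Av D (fun Z => Av l (fun s => ind (x ∈ X Z s))) =
          Av D (fun Z => FF A l ([] ++ real p id ds Z x)) := by
        refine Av_congr fun Z hZ => ?_
        rw [List.nil_append]
        unfold FF
        rw [← Av_mul_left, ← Av_take' (Nat.sub_le l (real p id ds Z x).length)]
        refine Av_congr fun s _ => ?_
        rw [← ind_and]
        rfl
      rw [h2]
      have h3 : (x.length : ℝ) * ε ≤ n * ε :=
        mul_le_mul_of_nonneg_right (by exact_mod_cast hx.le) hε0
      linarith)
  rw [hsum (fun Z s => ind (LineIn w0 (X Z s)))] at hw0θ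
  obtain ⟨Z, hZ, hZθ⟩ := Av_exists hw0θ
  obtain ⟨c0, u, rfl⟩ := exists_decomp w0 hw0
  have hc0n : c0.length < n := by simp at hw0n; omega
  obtain ⟨z, hz⟩ := real_left p some ds Z (c0.map some) none u (by simp; omega)
  have hsb : sb p some none = p := by
    unfold sb
    conv_rhs => rw [← List.map_id p]
    apply List.map_congr_left
    intro o _
    cases o <;> rfl
  have hcs : real p some ds Z (c0.map some) = (real p id ds Z c0).map some := by
    rw [real_nat]; rfl
  rw [hsb, hcs] at hz
  set c := real p id ds Z c0 with hc
  have hT : ∀ a, real p id ds Z ((c0.map some ++ none :: u).map (fun o => o.getD a)) =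
      c ++ (p ++ z).map (fun o => o.getD a) := by
    intro a
    have h1 := real_nat p some (fun o : Option Γ => o.getD a) ds Z (c0.map some ++ none :: u)
    rw [hz, List.map_append, map_getD_some] at h1
    exact h1.symm
  have hL1 := hlen some Z (c0.map some ++ none :: u) hZ hw0n
  rw [hz, List.length_append, List.length_map] at hL1
  have hL0 := hlen id Z c0 hZ hc0n
  have hTl : ∀ a : Γ, (c ++ (p ++ z).map (fun o => o.getD a)).length =
      c.length + (p ++ z).length := by
    intro a; rw [List.length_append, List.length_map]
  have hex : ∃ s, LineIn (c0.map some ++ none :: u) (X Z s) := by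
    by_contra hno
    push Not at hno
    have : Av l (fun s => ind (LineIn (c0.map some ++ none :: u) (X Z s))) ≤ 0 :=
      Av_le fun s _ => (ind_false (hno s)).le
    linarith
  obtain ⟨s0, hs0⟩ := hex
  refine ⟨c, p ++ z, List.prefix_append _ _, ?_, ?_, hL0.1, hL1.1, hL1.2, ?_⟩
  · have := hs0.1
    rw [root_append] at this
    exact this.1
  · intro a
    have := (hs0.2 a).1
    rw [hT a] at this
    exact this
  · refine hZθ.trans ?_
    rw [← Av_take' (Nat.sub_le l (c.length + (p ++ z).length))]
    refine Av_mono fun s _ => ind_mono fun h a => ?_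
    have := (h.2 a).2
    rw [hT a, hTl a] at this
    exact this

end Last

lemma dens_eq (k n : ℕ) (A : Set (Word k)) :
    dens k n A = Av n (fun w : List (Fin k) => ind (w ∈ A)) := by
  classical
  rw [Av_eq_sum, Fintype.card_fin]
  unfold dens
  congr 1
  have h1 : {x ∈ A | x.length = n} =
      Set.image (List.ofFn : (Fin n → Fin k) → List (Fin k))
        (↑(Finset.univ.filter (fun v : Fin n → Fin k => List.ofFn v ∈ A)) : Set _) := by
    ext x
    constructor
    · rintro ⟨hx, rfl⟩
      exact ⟨x.get, by simpa using hx, List.ofFn_get x⟩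
    · rintro ⟨v, hv, rfl⟩
      exact ⟨by simpa using hv, by simp⟩
  rw [h1, Set.ncard_image_of_injective _ List.ofFn_injective, Set.ncard_coe_finset]
  unfold ind
  rw [Finset.sum_ite]
  simp

end CSD

/-- Corollary 11.12: for `k` and `δ` there is `θ > 0` such that for every infinite set
`L` of levels on which `A` is `δ`-dense and every variable word `p`, there are a word
`c`, a variable word `w` of pattern `p` (i.e. with `p <+: w`) and an infinite `L' ⊆ L`
such that the Carlson–Simpson line `V = {c} ∪ {c ⌢ w(a) : a ∈ [k]}` lies in
`⋃_{ℓ ∈ L₀} A ∩ [k]^ℓ` where `L₀ = {ℓ ∈ L : ℓ < min L'}`, and such that for every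
`ℓ ∈ L'` the common extensions of the top level `V(1)` into `A` have density at least
`θ` in `[k]^{ℓ - ℓ₁}`, where `ℓ₁ = |c| + |w|` is the unique integer with
`V(1) ⊆ [k]^{ℓ₁}`. -/
theorem infinite_pattern_dichotomy (k : ℕ) (hk : 2 ≤ k) (δ : ℝ)
    (hδ0 : 0 < δ) (hδ1 : δ ≤ 1) :
    ∃ θ : ℝ, 0 < θ ∧
      ∀ L : Set ℕ, L.Infinite → ∀ A : Set (Word k), (∀ ℓ ∈ L, δ ≤ dens k ℓ A) →
        ∀ p : VWord k, IsVar p →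
          ∃ (c : Word k) (w : VWord k) (L' : Set ℕ),
            IsVar w ∧ p <+: w ∧ L' ⊆ L ∧ L'.Infinite ∧
            (insert c {x | ∃ a : Fin k, x = c ++ subst w a} ⊆
              {x ∈ A | x.length ∈ L ∧ x.length < sInf L'}) ∧
            ∀ ℓ ∈ L', θ ≤ dens k (ℓ - (c.length + w.length))
              {s | ∀ a : Fin k, c ++ subst w a ++ s ∈ A} := by
  classical
  have hne : Nonempty (Fin k) := ⟨⟨0, by omega⟩⟩
  set η : ℝ := δ ^ 2 / 2 with hη
  have hη0 : 0 < η := by positivity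
  obtain ⟨n, θ, hθ, hPL⟩ := CSD.PL (α := Fin k) (δ := η / 4) (by positivity)
    (CSD.P_all (Fin k) (η / 4) (by positivity))
  have e4 : 2 * (η / 4) = η / 2 := by ring
  rw [e4] at hPL
  refine ⟨θ, hθ, ?_⟩
  intro L hL A hA p hp
  set ε : ℝ := η / (2 * (n + 1)) with hε
  have hε0 : 0 < ε := by positivity
  have hεn : n * ε ≤ η / 2 := by
    rw [hε, mul_div_assoc', div_le_div_iff₀ (by positivity) (by norm_num)]
    nlinarith
  have hA' : ∀ l ∈ L, δ ≤ CSD.Av l (fun w : List (Fin k) => CSD.ind (w ∈ A)) := by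
    intro l hl
    rw [← CSD.dens_eq]; exact hA l hl
  have hNB : (Filter.cofinite ⊓ Filter.principal L).NeBot := by
    exact hL.cofinite_inf_principal_neBot
  set U : Ultrafilter ℕ := Ultrafilter.of (Filter.cofinite ⊓ Filter.principal L) with hUdef
  have hU0 : (U : Filter ℕ) ≤ Filter.cofinite ⊓ Filter.principal L := Ultrafilter.of_le _
  have hU : (U : Filter ℕ) ≤ Filter.cofinite := hU0.trans inf_le_left
  have hLU : L ∈ U := (hU0.trans inf_le_right) (Filter.mem_principal_self L)
  have hHinf := CSD.H_infinite A L δ hδ0 hA' U hU hLU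
  set H := {t ∈ L | ∀ᶠ l in (U : Filter ℕ), δ ^ 2 / 2 ≤ CSD.corr A t l} with hH
  obtain ⟨B, hB⟩ := CSD.Good_exists p H hHinf η ε hε0 n 0
  set M := {l | l ∈ L ∧ B ≤ l ∧ ∀ t ∈ H, t < B → η ≤ CSD.corr A t l} with hM
  have hMU : ∀ᶠ l in (U : Filter ℕ), l ∈ M := by
    have h1 : ∀ᶠ l in (U : Filter ℕ), l ∈ L := hLU
    have h2 : ∀ᶠ l in (U : Filter ℕ), B ≤ l := by
      refine hU ?_
      have : ({l | l < B} : Set ℕ).Finite := Set.finite_lt_nat B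
      refine Filter.mem_of_superset this.compl_mem_cofinite ?_
      intro l hl
      simpa using hl
    have h3 : ∀ᶠ l in (U : Filter ℕ), ∀ t ∈ (Finset.range B).filter (fun t => t ∈ H),
        η ≤ CSD.corr A t l := by
      rw [Filter.eventually_all_finset]
      intro t ht
      exact (Finset.mem_filter.1 ht).2.2
    filter_upwards [h1, h2, h3] with l h1 h2 h3
    exact ⟨h1, h2, fun t ht htB => h3 t (Finset.mem_filter.2 ⟨Finset.mem_range.2 htB, ht⟩)⟩
  have hMinf : M.Infinite := by
    intro hfin
    have h1 : ∀ᶠ l in (U : Filter ℕ), l ∈ Mᶜ := hU hfin.compl_mem_cofinite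
    obtain ⟨l, hl1, hl2⟩ := (hMU.and h1).exists
    exact hl2 hl1
  let Q : ℕ → List (Fin k) × List (Option (Fin k)) → Prop := fun l cw =>
    p <+: cw.2 ∧ cw.1 ∈ A ∧
      (∀ a, cw.1 ++ cw.2.map (fun o => o.getD a) ∈ A) ∧ cw.1.length ∈ H ∧
      cw.1.length + cw.2.length ∈ H ∧ cw.1.length + cw.2.length < B ∧
      θ ≤ CSD.Av (l - (cw.1.length + cw.2.length))
        (fun s => CSD.ind (∀ a, cw.1 ++ cw.2.map (fun o => o.getD a) ++ s ∈ A))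
  have hQ : ∀ l ∈ M, ∃ cw, Q l cw := by
    intro l hl
    obtain ⟨ds, hds, hdsB, hG⟩ := hB (CSD.FF A l) (CSD.FF_nonneg A l) (CSD.FF_le_one A l) (by
      intro t ht htB
      rw [CSD.Av_FF A (by have := hl.2.1; omega)]
      exact hl.2.2 t ht htB)
    obtain ⟨c, w, h⟩ := CSD.core hθ hPL hε0.le hεn A p H l B hl.2.1 ds hds (by omega) hG
    exact ⟨(c, w), h⟩
  have hfinP : ({c : List (Fin k) | c.length < B} ×ˢ
      {w : List (Option (Fin k)) | w.length < B}).Finite :=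
    (CSD.finite_lt (Fin k) B).prod (CSD.finite_lt (Option (Fin k)) B)
  have hpig : ∃ cw, {l ∈ M | Q l cw}.Infinite := by
    by_contra hno
    push Not at hno
    refine hMinf ((hfinP.biUnion (t := fun cw => {l ∈ M | Q l cw}) fun cw _ =>
      Set.not_infinite.1 (by simpa using hno cw)).subset ?_)
    intro l hl
    obtain ⟨cw, hcw⟩ := hQ l hl
    have hlt := hcw.2.2.2.2.2.1
    exact Set.mem_biUnion (x := cw) ⟨show cw.1.length < B by omega, show cw.2.length < B by omega⟩
      ⟨hl, hcw⟩
  obtain ⟨⟨c, w⟩, hcw⟩ := hpig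
  obtain ⟨l0, hl0⟩ := hcw.nonempty
  obtain ⟨hpw, hcA, hcwA, hcH, hcwH, hlt, -⟩ := hl0.2
  dsimp only at hpw hcA hcwA hcH hcwH hlt
  have hBinf : B ≤ sInf {l ∈ M | Q l (c, w)} := (Nat.sInf_mem hcw.nonempty).1.2.1
  refine ⟨c, w, {l ∈ M | Q l (c, w)}, hpw.subset hp, hpw, fun l hl => hl.1.1, hcw, ?_, ?_⟩
  · intro x hx
    rcases hx with rfl | ⟨a, rfl⟩
    · exact ⟨hcA, hcH.1, by omega⟩
    · have hlen : (c ++ subst w a).length = c.length + w.length := by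
        simp [subst]
      refine ⟨hcwA a, ?_, ?_⟩
      · rw [hlen]; exact hcwH.1
      · rw [hlen]; omega
  · intro l hl
    rw [CSD.dens_eq]
    exact hl.2.2.2.2.2.2.2
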